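/- For every integer d ≥ 2, the genus 0 Hurwitz numbers satisfy the recursion H_{0,d} = ((2d−3)/d) · ∑_{i=1}^{d−1} binom(2d−4, 2i−2) · i² · (d−i)² · H_{0,i} · H_{0,d−i} in ℚ. -/

import Mathlib

/-- The number of `r`-tuples `(τ₁, …, τ_r)` of transpositions in the symmetric group on
`d` letters whose product `τ₁ ⬝ τ₂ ⋯ τ_r` is the identity and which generate a subgroup
acting transitively on the `d` letters. -/
noncomputable def hurwitzTupleCount (d r : ℕ) : ℕ :=
  Nat.card {τ : Fin r → Equiv.Perm (Fin d) //
    (∀ i, (τ i).IsSwap) ∧ (List.ofFn τ).prod = 1 ∧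
    ∀ x y : Fin d, ∃ σ ∈ Subgroup.closure (Set.range τ), σ x = y}

/-- The Hurwitz number `H_{g,d}`: `1/d!` times the number of `(2g - 2 + 2d)`-tuples of
transpositions in `S_d` with product the identity, generating a transitive subgroup. -/
noncomputable def hurwitzNumber (g d : ℕ) : ℚ :=
  (hurwitzTupleCount d (2 * g + 2 * d - 2) : ℚ) / (Nat.factorial d : ℚ)

/-!
Let `Z = ∑ y ^ d / d! ∑ t ^ r / r! · a d r`, where `a d r` is the number of factorizations of the
identity of `S_d` into `r` transpositions. Its logarithm `F` counts the transitive factorizations,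
that is, the Hurwitz numbers of all genera. With `θ = y d/dy`, the key fact is the Toda equation
`Z θ² Z - (θ Z)² = y Z(e ^ t y) Z(e ^ (-t) y)`. Its logarithmic derivative expresses `θ³ F` as the
product of `θ² F` and a series which is affine in `F`, and symmetrizing the lowest order in `t` of
this quadratic equation gives the genus `0` recursion.

To prove the Toda equation, weight a product of transpositions by `N` to the number of its cycles.
This gives the traces of the powers of the sum of all transpositions acting on `(ℚ ^ N) ^ ⊗ d`. Up
to scalars this sum is the Casimir element of `gl N`, whose radial part, conjugated by the
Vandermonde determinant, is `∑ (x i ∂ / ∂ x i) ^ 2`, which is diagonal on monomials. Hence the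
weighted series is, up to rescaling, a Hankel determinant of moments, and the Desnanot–Jacobi
identity is a Toda equation for these. Only the identity has `d` cycles, so the terms of top degree
in `N` form the Toda equation for `Z`.
-/

section Determinants

open Finset Matrix

section Derivations

variable {R S ι : Type*} [CommRing R] [CommRing S] [Algebra R S] [DecidableEq ι]

theorem derivation_finsetProd (D : Derivation R S S) (s : Finset ι) (f : ι → S) :
    D (∏ i ∈ s, f i) = ∑ i ∈ s, D (f i) * ∏ j ∈ s.erase i, f j := by
  induction s using Finset.induction_on with
  | empty => simp
  | insert a s ha ih =>
    rw [prod_insert ha, D.leibniz, ih, sum_insert ha, erase_insert ha, smul_eq_mul, smul_eq_mul,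
      mul_sum, add_comm, mul_comm (∏ i ∈ s, f i)]
    congr 1
    refine sum_congr rfl fun i hi => ?_
    have hai : a ≠ i := fun h => ha (h ▸ hi)
    rw [erase_insert_of_ne hai, prod_insert fun h => ha (mem_of_mem_erase h)]
    ring

theorem derivation_det_eq_sum_updateRow [Fintype ι] (D : Derivation R S S) (M : Matrix ι ι S) :
    D M.det = ∑ i, (M.updateRow i fun j => D (M i j)).det := by
  have det_eq (A : Matrix ι ι S) :
      A.det = ∑ σ : Equiv.Perm ι, (Equiv.Perm.sign σ : ℤ) • ∏ i, A i (σ i) := by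
    rw [← det_transpose, det_apply]
    rfl
  simp_rw [det_eq, map_sum, map_zsmul, derivation_finsetProd, smul_sum]
  rw [sum_comm]
  refine sum_congr rfl fun i _ => sum_congr rfl fun σ _ => ?_
  rw [← mul_prod_erase univ _ (mem_univ i), updateRow_self]
  congr 2
  exact prod_congr rfl fun j hj => by rw [updateRow_ne (ne_of_mem_erase hj)]

end Derivations

section Minors

variable {S T : Type*} [CommRing S] [CommRing T]

/-- The leading principal minor of size `n` of an infinite matrix. -/
def leadingMinor (M : Matrix ℕ ℕ S) (n : ℕ) : S :=
  (M.submatrix ((↑) : Fin n → ℕ) ((↑) : Fin n → ℕ)).det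

/-- The minor of an infinite matrix on rows `0, …, n - 1, a` and columns `0, …, n - 1, b`. -/
def borderedMinor (M : Matrix ℕ ℕ S) (n a b : ℕ) : S :=
  (M.submatrix (Sum.elim ((↑) : Fin n → ℕ) fun _ : Unit => a)
    (Sum.elim ((↑) : Fin n → ℕ) fun _ : Unit => b)).det

theorem map_leadingMinor (f : S →+* T) (M : Matrix ℕ ℕ S) (n : ℕ) :
    f (leadingMinor M n) = leadingMinor (M.map f) n :=
  f.map_det _

theorem map_borderedMinor (f : S →+* T) (M : Matrix ℕ ℕ S) (n a b : ℕ) :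
    f (borderedMinor M n a b) = borderedMinor (M.map f) n a b :=
  f.map_det _

theorem borderedMinor_transpose (M : Matrix ℕ ℕ S) (n a b : ℕ) :
    borderedMinor Mᵀ n a b = borderedMinor M n b a := by
  rw [borderedMinor, ← transpose_submatrix, det_transpose, borderedMinor]

theorem borderedMinor_self (M : Matrix ℕ ℕ S) (n : ℕ) :
    borderedMinor M n n n = leadingMinor M (n + 1) := by
  let e : Fin n ⊕ Unit ≃ Fin (n + 1) :=
    ((Equiv.refl _).sumCongr (Equiv.equivPUnit (Fin 1)).symm).trans finSumFinEquiv
  rw [leadingMinor, ← det_submatrix_equiv_self e]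
  refine congrArg det (ext fun i j => ?_)
  rcases i with i | i <;> rcases j with j | j <;> simp [e]

theorem leadingMinor_mul_of_isUnit (M : Matrix ℕ ℕ S) (n : ℕ) (hM : IsUnit (leadingMinor M n)) :
    leadingMinor M (n + 2) * leadingMinor M n =
      borderedMinor M n n n * borderedMinor M n (n + 1) (n + 1) -
        borderedMinor M n n (n + 1) * borderedMinor M n (n + 1) n := by
  let A : Matrix (Fin n) (Fin n) S := M.submatrix (↑) (↑)
  let _ : Invertible A := A.invertibleOfIsUnitDet hM
  let schur (a b : ℕ) : S :=
    M a b - ∑ x : Fin n, (∑ y : Fin n, M a y * ⅟A y x) * M x b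
  have bordered (a b : ℕ) : borderedMinor M n a b = leadingMinor M n * schur a b := by
    have blocks : borderedMinor M n a b = (fromBlocks A (of fun i (_ : Unit) => M i b)
        (of fun (_ : Unit) j => M a j) (of fun _ _ => M a b)).det := by
      refine congrArg det (ext fun i j => ?_)
      rcases i with i | i <;> rcases j with j | j <;> rfl
    rw [blocks, det_fromBlocks₁₁, det_unique (n := Unit)]
    simp [schur, Matrix.mul_apply, A, leadingMinor]
  have leading : leadingMinor M (n + 2) = leadingMinor M n *
      (schur n n * schur (n + 1) (n + 1) - schur n (n + 1) * schur (n + 1) n) := by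
    have blocks : leadingMinor M (n + 2) = (fromBlocks A (of fun i (j : Fin 2) => M i (n + j))
        (of fun (i : Fin 2) j => M (n + i) j) (of fun i j => M (n + i) (n + j))).det := by
      rw [leadingMinor, ← det_submatrix_equiv_self finSumFinEquiv]
      refine congrArg det (ext fun i j => ?_)
      rcases i with i | i <;> rcases j with j | j <;> simp [A]
    rw [blocks, det_fromBlocks₁₁, det_fin_two]
    simp [schur, Matrix.mul_apply, A, leadingMinor]
  rw [leading, bordered, bordered, bordered, bordered]
  ring

-- The Desnanot–Jacobi identity, deduced from the generic matrix, whose minors become invertible in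
-- the field of fractions.
theorem leadingMinor_add_two_mul (M : Matrix ℕ ℕ S) (n : ℕ) :
    leadingMinor M (n + 2) * leadingMinor M n =
      borderedMinor M n n n * borderedMinor M n (n + 1) (n + 1) -
        borderedMinor M n n (n + 1) * borderedMinor M n (n + 1) n := by
  let G := mvPolynomialX ℕ ℕ ℤ
  have leading_ne_zero : leadingMinor G n ≠ 0 := by
    intro h
    have := map_leadingMinor (MvPolynomial.eval₂Hom (Int.castRingHom ℤ) fun p : ℕ × ℕ =>
      (1 : Matrix ℕ ℕ ℤ) p.1 p.2) G n
    rw [h, map_zero, MvPolynomial.coe_eval₂Hom, mvPolynomialX_map_eval₂, leadingMinor,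
      submatrix_one _ Fin.val_injective, det_one] at this
    exact zero_ne_one this
  have generic : leadingMinor G (n + 2) * leadingMinor G n =
      borderedMinor G n n n * borderedMinor G n (n + 1) (n + 1) -
        borderedMinor G n n (n + 1) * borderedMinor G n (n + 1) n := by
    have inj := IsFractionRing.injective (MvPolynomial (ℕ × ℕ) ℤ)
      (FractionRing (MvPolynomial (ℕ × ℕ) ℤ))
    apply inj
    simp only [map_mul, map_sub, map_leadingMinor, map_borderedMinor]
    apply leadingMinor_mul_of_isUnit
    rw [← map_leadingMinor]
    exact ((map_ne_zero_iff _ inj).2 leading_ne_zero).isUnit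
  have := congrArg (MvPolynomial.eval₂Hom (Int.castRingHom S) fun p : ℕ × ℕ => M p.1 p.2) generic
  simpa only [map_mul, map_sub, map_leadingMinor, map_borderedMinor, MvPolynomial.coe_eval₂Hom, G,
    mvPolynomialX_map_eval₂] using this

end Minors

section Hankel

variable {R S : Type*}

/-- The infinite Hankel matrix with entries `h (i + j)`. -/
def hankel (h : ℕ → S) : Matrix ℕ ℕ S := of fun i j => h (i + j)

theorem hankel_transpose (h : ℕ → S) : (hankel h)ᵀ = hankel h := by
  ext i j
  simp [hankel, add_comm]

variable [CommRing R] [CommRing S] [Algebra R S]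

-- Differentiating a row of index `< n` turns it into the next row, so the determinant vanishes.
theorem derivation_borderedMinor_hankel (D : Derivation R S S) {h : ℕ → S}
    (hD : ∀ n, D (h n) = h (n + 1)) (n b : ℕ) :
    D (borderedMinor (hankel h) n n b) = borderedMinor (hankel h) n (n + 1) b := by
  have D_hankel (i j : ℕ) : D (hankel h i j) = hankel h (i + 1) j := by
    simp only [hankel, of_apply, hD]
    ring_nf
  simp only [borderedMinor, derivation_det_eq_sum_updateRow, submatrix_apply, D_hankel]
  rw [Fintype.sum_sum_type, sum_eq_zero fun k _ => ?_, zero_add]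
  · rw [univ_unique, sum_singleton]
    refine congrArg det (ext fun i j => ?_)
    rcases i with i | i <;> simp [updateRow_apply]
  · obtain hk | hk : (k : ℕ) + 1 < n ∨ (k : ℕ) + 1 = n := by omega
    · refine det_zero_of_row_eq (i := Sum.inl k) (j := Sum.inl ⟨k + 1, hk⟩)
        (by simp [Fin.ext_iff]) (funext fun j => ?_)
      simp [updateRow_apply, Fin.ext_iff]
    · refine det_zero_of_row_eq (i := Sum.inl k) (j := Sum.inr ()) (by simp) (funext fun j => ?_)
      simp [updateRow_apply, hk]

theorem hankel_toda (D : Derivation R S S) {h : ℕ → S} (hD : ∀ n, D (h n) = h (n + 1)) (n : ℕ) :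
    leadingMinor (hankel h) (n + 2) * leadingMinor (hankel h) n =
      leadingMinor (hankel h) (n + 1) * D (D (leadingMinor (hankel h) (n + 1))) -
        D (leadingMinor (hankel h) (n + 1)) ^ 2 := by
  have symm (a b : ℕ) : borderedMinor (hankel h) n a b = borderedMinor (hankel h) n b a := by
    rw [← borderedMinor_transpose, hankel_transpose]
  rw [leadingMinor_add_two_mul, ← borderedMinor_self, derivation_borderedMinor_hankel D hD,
    symm (n + 1) n, derivation_borderedMinor_hankel D hD]
  ring

end Hankel

end Determinants

section GeneratingSeries

open Finset Matrix PowerSeries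

section Exponential

variable {A : Type*} [CommRing A] [Algebra ℚ A]

/-- The exponential series `exp (c t)`. -/
noncomputable def expSeries (c : A) : A⟦X⟧ := rescale c (exp A)

theorem expSeries_zero : expSeries (0 : A) = 1 := by
  simp [expSeries]

theorem expSeries_add (a b : A) : expSeries (a + b) = expSeries a * expSeries b :=
  (exp_mul_exp_eq_exp_add a b).symm

theorem coeff_expSeries (c : A) (n : ℕ) :
    coeff n (expSeries c) = (n.factorial : ℚ)⁻¹ • c ^ n := by
  simp [expSeries, coeff_rescale, Algebra.smul_def, mul_comm]

theorem expSeries_pow (c : A) (n : ℕ) : expSeries c ^ n = expSeries (n * c) := by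
  rw [expSeries, ← map_pow, exp_pow_eq_rescale_exp, rescale_rescale, mul_comm, expSeries]

theorem expSeries_sum {ι : Type*} (s : Finset ι) (f : ι → A) :
    expSeries (∑ i ∈ s, f i) = ∏ i ∈ s, expSeries (f i) := by
  classical
  induction s using Finset.induction_on with
  | empty => simp [expSeries_zero]
  | insert a s ha ih => rw [sum_insert ha, prod_insert ha, expSeries_add, ih]

theorem isUnit_expSeries (c : A) : IsUnit (expSeries c) :=
  .of_mul_eq_one (expSeries (-c)) (by rw [← expSeries_add, add_neg_cancel, expSeries_zero])

end Exponential

section EulerDerivation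

variable (R : Type*) [CommRing R]

/-- The derivation `X d/dX` of the ring of power series. -/
noncomputable def eulerDerivation : Derivation R R⟦X⟧ R⟦X⟧ :=
  (X : R⟦X⟧) • derivative R

variable {R}

theorem coeff_eulerDerivation (f : R⟦X⟧) (n : ℕ) :
    coeff n (eulerDerivation R f) = n * coeff n f := by
  cases n with
  | zero => simp [eulerDerivation]
  | succ n =>
    simp only [eulerDerivation, Derivation.smul_apply, smul_eq_mul, coeff_succ_X_mul,
      coeff_derivative]
    push_cast
    ring

theorem eulerDerivation_X_pow (k : ℕ) :
    eulerDerivation R (X ^ k : R⟦X⟧) = (k : R⟦X⟧) * X ^ k := by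
  cases k with
  | zero => simp
  | succ k =>
    simp [eulerDerivation, Derivation.leibniz_pow]
    ring

theorem eulerDerivation_rescale (c : R) (f : R⟦X⟧) :
    eulerDerivation R (rescale c f) = rescale c (eulerDerivation R f) := by
  ext n
  simp only [coeff_eulerDerivation, coeff_rescale]
  ring

end EulerDerivation

section TodaForm

variable {R : Type*} [CommRing R]

/-- The bilinear expression `f θ² f - (θ f)²` for `θ = X d/dX`, which is `f²` times the second
logarithmic derivative of `f`. -/
noncomputable def todaForm (f : R⟦X⟧) : R⟦X⟧ :=
  f * eulerDerivation R (eulerDerivation R f) - eulerDerivation R f ^ 2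

theorem todaForm_mul_of_eigenvector {g : R⟦X⟧} {k : ℕ} (hg : eulerDerivation R g = k * g)
    (f : R⟦X⟧) : todaForm (g * f) = g ^ 2 * todaForm f := by
  simp only [todaForm, Derivation.leibniz, hg, map_add, smul_eq_mul, Derivation.map_natCast]
  ring

theorem todaForm_X_pow_mul (k : ℕ) (f : R⟦X⟧) :
    todaForm (X ^ k * f) = X ^ (2 * k) * todaForm f := by
  rw [todaForm_mul_of_eigenvector (eulerDerivation_X_pow k), ← pow_mul, mul_comm k]

theorem todaForm_C_mul (c : R) (f : R⟦X⟧) : todaForm (C c * f) = C (c ^ 2) * todaForm f := by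
  rw [todaForm_mul_of_eigenvector (k := 0) (by simp [eulerDerivation]), map_pow]

theorem todaForm_rescale (c : R) (f : R⟦X⟧) :
    todaForm (rescale c f) = rescale c (todaForm f) := by
  simp only [todaForm, eulerDerivation_rescale, map_sub, map_mul, map_pow]

end TodaForm

section MomentSeries

variable {R : Type*} [CommRing R]

/-- The generating series of the `m`-th moments `n ^ m * a n` of a weight `a`. -/
noncomputable def momentSeries (a : ℕ → R) (m : ℕ) : R⟦X⟧ :=
  PowerSeries.mk fun n => (n : R) ^ m * a n

theorem eulerDerivation_momentSeries (a : ℕ → R) (m : ℕ) :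
    eulerDerivation R (momentSeries a m) = momentSeries a (m + 1) := by
  ext n
  simp only [coeff_eulerDerivation, momentSeries, coeff_mk]
  ring

theorem todaForm_leadingMinor_momentSeries (a : ℕ → R) (n : ℕ) :
    todaForm (leadingMinor (hankel (momentSeries a)) (n + 1)) =
      leadingMinor (hankel (momentSeries a)) (n + 2) * leadingMinor (hankel (momentSeries a)) n :=
  (hankel_toda (eulerDerivation R) (eulerDerivation_momentSeries a) n).symm

/-- The matrix obtained from the Hankel matrix of moments for the weight `q n / n!` by replacing
the powers `n ^ i` attached to row `i` by falling factorials and removing the factor `X ^ i`. -/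
noncomputable def shiftedMomentMatrix [Algebra ℚ R] (q : ℕ → R) (N : ℕ) :
    Matrix (Fin N) (Fin N) R⟦X⟧ :=
  of fun i j => PowerSeries.mk fun c =>
    (c.factorial : ℚ)⁻¹ • (((c + i : ℕ) : R) ^ (j : ℕ) * q (c + i))

theorem leadingMinor_hankel_momentSeries [IsDomain R] [Algebra ℚ R] (q : ℕ → R) (N : ℕ) :
    leadingMinor (hankel (momentSeries fun n => (n.factorial : ℚ)⁻¹ • q n)) N =
      X ^ N.choose 2 * (shiftedMomentMatrix q N).det := by
  let P : Matrix (Fin N) (Fin N) R⟦X⟧ := of fun i j => C ((descPochhammer R i).coeff j)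
  have det_P : P.det = 1 := by
    rw [← det_transpose, ← map_one C,
      ← det_matrixOfPolynomials (fun j : Fin N => descPochhammer R j)
        (fun j => descPochhammer_natDegree R j) (fun j => monic_descPochhammer R j),
      RingHom.map_det]
    rfl
  have sum_fin : ∑ i : Fin N, (i : ℕ) = N.choose 2 := by
    rw [Fin.sum_univ_eq_sum_range (fun i => i), sum_range_id, Nat.choose_two_right]
  rw [← sum_fin, ← prod_pow_eq_pow_sum, ← det_mul_column, leadingMinor, ← one_mul (det _), ← det_P,
    ← det_mul]
  refine congrArg det (Matrix.ext fun i j => PowerSeries.ext fun n => ?_)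
  have falling : ∑ k : Fin N, (descPochhammer R i).coeff k * (n : R) ^ (k : ℕ) =
      n.descFactorial i := by
    rw [Fin.sum_univ_eq_sum_range fun k => (descPochhammer R (i : ℕ)).coeff k * (n : R) ^ k,
      ← Polynomial.eval_eq_sum_range' (by rw [descPochhammer_natDegree]; exact i.2),
      descPochhammer_eval_eq_descFactorial]
  calc coeff n ((P * (hankel (momentSeries fun n => (n.factorial : ℚ)⁻¹ • q n)).submatrix
        ((↑) : Fin N → ℕ) ((↑) : Fin N → ℕ)) i j)
      = ∑ k : Fin N, (descPochhammer R i).coeff k * (n : R) ^ (k : ℕ) *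
          ((n : R) ^ (j : ℕ) * (n.factorial : ℚ)⁻¹ • q n) := by
        simp only [Matrix.mul_apply, map_sum, P, of_apply, coeff_C_mul, submatrix_apply, hankel,
          momentSeries, coeff_mk]
        exact sum_congr rfl fun k _ => by ring
    _ = n.descFactorial i * ((n : R) ^ (j : ℕ) * (n.factorial : ℚ)⁻¹ • q n) := by
        rw [← sum_mul, falling]
    _ = coeff n (X ^ (i : ℕ) * shiftedMomentMatrix q N i j) := by
        rw [coeff_X_pow_mul']
        split_ifs with h
        · obtain ⟨c, rfl⟩ := Nat.exists_eq_add_of_le' h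
          have factorial_eq : (c.factorial : ℚ)⁻¹ =
              ((c + i).descFactorial i : ℚ) * ((c + i).factorial : ℚ)⁻¹ := by
            rw [← Nat.factorial_mul_descFactorial h, Nat.add_sub_cancel, Nat.cast_mul, mul_inv,
              mul_left_comm, mul_inv_cancel₀, mul_one]
            rw [Nat.cast_ne_zero, Ne, Nat.descFactorial_eq_zero_iff_lt]
            omega
          rw [shiftedMomentMatrix, of_apply, coeff_mk, Nat.add_sub_cancel, factorial_eq, mul_smul,
            Nat.cast_smul_eq_nsmul, nsmul_eq_mul, mul_smul_comm]
        · rw [Nat.descFactorial_of_lt (by omega), Nat.cast_zero, zero_mul]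

theorem todaForm_det_shiftedMomentMatrix [IsDomain R] [Algebra ℚ R] (q : ℕ → R) (n : ℕ) :
    todaForm (shiftedMomentMatrix q (n + 1)).det =
      X * ((shiftedMomentMatrix q (n + 2)).det * (shiftedMomentMatrix q n).det) := by
  have toda := todaForm_leadingMinor_momentSeries (fun n => (n.factorial : ℚ)⁻¹ • q n) n
  have choose_two : (n + 2).choose 2 + n.choose 2 = 2 * (n + 1).choose 2 + 1 := by
    have pascal (m : ℕ) : (m + 1).choose 2 = m + m.choose 2 := by
      rw [Nat.choose_succ_succ', Nat.choose_one_right]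
    rw [pascal, pascal]
    ring
  simp only [leadingMinor_hankel_momentSeries] at toda
  rw [todaForm_X_pow_mul, mul_mul_mul_comm, ← pow_add, choose_two, pow_succ, mul_assoc] at toda
  exact mul_left_cancel₀ (pow_ne_zero _ X_ne_zero) toda

end MomentSeries

end GeneratingSeries

section WordSums

open Finset PowerSeries

variable {G H M N A : Type*} [AddCommMonoid M] [AddCommMonoid N] [Semiring A]

/-- The sum of `f` over all words of a given length in the alphabet `L`. -/
def wordSum (L : Finset G) : (List G → M) → ℕ → M
  | f, 0 => f []
  | f, r + 1 => ∑ x ∈ L, wordSum L (fun l => f (x :: l)) r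

theorem wordSum_eq_sum_piFinset (L : Finset G) (f : List G → M) (r : ℕ) :
    wordSum L f r = ∑ v ∈ Fintype.piFinset fun _ : Fin r => L, f (List.ofFn v) := by
  induction r generalizing f with
  | zero => simp [wordSum]
  | succ r ih =>
    simp_rw [wordSum, ih]
    rw [← sum_product']
    refine sum_equiv (Fin.consEquiv fun _ => G) (fun p => ?_) fun p _ => ?_
    · simp [Fin.forall_fin_succ]
    · simp [List.ofFn_succ]

theorem wordSum_congr {L : Finset G} {f g : List G → M} (h : ∀ l, (∀ x ∈ l, x ∈ L) → f l = g l)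
    (r : ℕ) : wordSum L f r = wordSum L g r := by
  induction r generalizing f g with
  | zero => exact h [] (by simp)
  | succ r ih =>
    exact sum_congr rfl fun x hx => ih fun l hl => h _ (List.forall_mem_cons.2 ⟨hx, hl⟩)

theorem wordSum_sum {ι : Type*} (s : Finset ι) (L : Finset G) (f : ι → List G → M) (r : ℕ) :
    wordSum L (fun l => ∑ i ∈ s, f i l) r = ∑ i ∈ s, wordSum L (f i) r := by
  simp only [wordSum_eq_sum_piFinset]
  rw [sum_comm]

theorem map_wordSum (φ : M →+ N) (L : Finset G) (f : List G → M) (r : ℕ) :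
    φ (wordSum L f r) = wordSum L (fun l => φ (f l)) r := by
  simp only [wordSum_eq_sum_piFinset, map_sum]

theorem wordSum_map (φ : G ↪ H) (L : Finset G) (f : List H → M) (r : ℕ) :
    wordSum (L.map φ) f r = wordSum L (fun l => f (l.map φ)) r := by
  induction r generalizing f with
  | zero => rfl
  | succ r ih => simp [wordSum, ih]

theorem wordSum_eq_of_subset {L L' : Finset G} (hL : L' ⊆ L) {f : List G → M}
    (hf : ∀ l, (∀ x ∈ l, x ∈ L) → f l ≠ 0 → ∀ x ∈ l, x ∈ L') (r : ℕ) :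
    wordSum L f r = wordSum L' f r := by
  simp only [wordSum_eq_sum_piFinset]
  refine (sum_subset (Fintype.piFinset_subset _ _ fun _ => hL) fun v hv hv' => ?_).symm
  by_contra h
  refine hv' (Fintype.mem_piFinset.2 (List.forall_mem_ofFn_iff.1 (hf _ ?_ h)))
  simpa [List.forall_mem_ofFn_iff] using hv

theorem wordSum_list_prod (φ : G → A) (L : Finset G) (r : ℕ) :
    wordSum L (fun l => (l.map φ).prod) r = (∑ x ∈ L, φ x) ^ r := by
  induction r with
  | zero => simp [wordSum]
  | succ r ih =>
    simp only [wordSum, List.map_cons, List.prod_cons, pow_succ', sum_mul]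
    refine sum_congr rfl fun x _ => ?_
    rw [← ih]
    exact (map_wordSum (AddMonoidHom.mulLeft (φ x)) L _ r).symm

/-- The exponential generating series, by length, of the sums of `f` over words in `L`. -/
noncomputable def wordEGF (L : Finset G) (f : List G → ℚ) : ℚ⟦X⟧ :=
  PowerSeries.mk fun r => wordSum L f r / r.factorial

theorem constantCoeff_wordEGF (L : Finset G) (f : List G → ℚ) :
    constantCoeff (wordEGF L f) = f [] := by
  simp [wordEGF, wordSum, ← coeff_zero_eq_constantCoeff_apply]

theorem derivative_wordEGF (L : Finset G) (f : List G → ℚ) :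
    d⁄dX ℚ (wordEGF L f) = ∑ x ∈ L, wordEGF L fun l => f (x :: l) := by
  ext r
  simp only [coeff_derivative, wordEGF, coeff_mk, wordSum, map_sum, ← sum_div, Nat.factorial_succ]
  push_cast
  field_simp

-- Choosing a word in two disjoint alphabets amounts to shuffling a word in each.
theorem wordEGF_union [DecidableEq G] {L L' : Finset G} (hL : Disjoint L L')
    (f g : List G → ℚ) :
    wordEGF (L ∪ L') (fun l => f (l.filter (· ∈ L)) * g (l.filter (· ∈ L'))) =
      wordEGF L f * wordEGF L' g := by
  ext r
  induction r generalizing f g with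
  | zero => simp [constantCoeff_wordEGF]
  | succ r ih =>
    have left (x) (hx : x ∈ L) : coeff r (wordEGF (L ∪ L') fun l =>
        f ((x :: l).filter (· ∈ L)) * g ((x :: l).filter (· ∈ L'))) =
        coeff r (wordEGF L (fun l => f (x :: l)) * wordEGF L' g) := by
      simpa [hx, disjoint_left.1 hL hx] using ih (fun l => f (x :: l)) g
    have right (x) (hx : x ∈ L') : coeff r (wordEGF (L ∪ L') fun l =>
        f ((x :: l).filter (· ∈ L)) * g ((x :: l).filter (· ∈ L'))) =
        coeff r (wordEGF L f * wordEGF L' fun l => g (x :: l)) := by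
      simpa [hx, disjoint_right.1 hL hx] using ih f fun l => g (x :: l)
    have deriv : coeff r (d⁄dX ℚ (wordEGF (L ∪ L') fun l =>
          f (l.filter (· ∈ L)) * g (l.filter (· ∈ L')))) =
        coeff r (d⁄dX ℚ (wordEGF L f * wordEGF L' g)) := by
      rw [derivative_wordEGF, sum_union hL, map_add, map_sum, map_sum, sum_congr rfl left,
        sum_congr rfl right, Derivation.leibniz, derivative_wordEGF, derivative_wordEGF, map_add,
        smul_eq_mul, smul_eq_mul, mul_sum, mul_sum, map_sum, map_sum, add_comm]
      simp only [mul_comm]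
    rw [coeff_derivative, coeff_derivative] at deriv
    exact mul_right_cancel₀ (by positivity) deriv

end WordSums

section PermutationWords

open Finset PowerSeries Equiv

theorem extendDomain_swap {α β : Type*} [DecidableEq α] [DecidableEq β] {p : β → Prop}
    [DecidablePred p] (e : α ≃ Subtype p) (a b : α) :
    (swap a b).extendDomain e = swap (e a : β) (e b) := by
  ext y
  by_cases hy : p y
  · obtain ⟨x, hx⟩ := e.surjective ⟨y, hy⟩
    obtain rfl : (e x : β) = y := by rw [hx]
    rw [Perm.extendDomain_apply_image]
    exact (Subtype.val_injective.comp e.injective).map_swap a b x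
  · rw [Perm.extendDomain_apply_not_subtype _ _ hy, swap_apply_of_ne_of_ne]
    · rintro rfl
      exact hy (e a).2
    · rintro rfl
      exact hy (e b).2

section Transpositions

variable {α : Type*} [Fintype α] [DecidableEq α]

open scoped Classical in
/-- The transpositions of two letters of `S`. -/
noncomputable def swapsOn (S : Finset α) : Finset (Perm α) :=
  {τ | τ.IsSwap ∧ τ.support ⊆ S}

theorem mem_swapsOn {S : Finset α} {τ : Perm α} :
    τ ∈ swapsOn S ↔ τ.IsSwap ∧ τ.support ⊆ S := by
  simp [swapsOn]

theorem swap_mem_swapsOn {S : Finset α} {a b : α} (hab : a ≠ b) :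
    swap a b ∈ swapsOn S ↔ a ∈ S ∧ b ∈ S := by
  rw [mem_swapsOn, Perm.support_swap hab]
  simp [insert_subset_iff, show (swap a b).IsSwap from ⟨a, b, hab, rfl⟩]

theorem apply_mem_iff_of_mem_swapsOn {S : Finset α} {τ : Perm α} (hτ : τ ∈ swapsOn S) (x : α) :
    τ x ∈ S ↔ x ∈ S := by
  by_cases hx : x ∈ τ.support
  · exact iff_of_true ((mem_swapsOn.1 hτ).2 (Perm.apply_mem_support.2 hx))
      ((mem_swapsOn.1 hτ).2 hx)
  · rw [Perm.notMem_support.1 hx]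

theorem disjoint_of_mem_swapsOn {S T : Finset α} (hST : Disjoint S T) {σ τ : Perm α}
    (hσ : σ ∈ swapsOn S) (hτ : τ ∈ swapsOn T) : σ.Disjoint τ :=
  Perm.disjoint_iff_disjoint_support.2
    (hST.mono (mem_swapsOn.1 hσ).2 (mem_swapsOn.1 hτ).2)

theorem disjoint_swapsOn {S T : Finset α} (hST : Disjoint S T) :
    Disjoint (swapsOn S) (swapsOn T) := by
  refine disjoint_left.2 fun τ hτ hτ' => ?_
  obtain ⟨a, b, hab, rfl⟩ := (mem_swapsOn.1 hτ).1
  exact disjoint_left.1 hST ((swap_mem_swapsOn hab).1 hτ).1 ((swap_mem_swapsOn hab).1 hτ').1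

theorem mem_swapsOn_union_compl {S : Finset α} {τ : Perm α} (hτ : τ.IsSwap)
    (hS : ∀ x ∈ S, τ x ∈ S) : τ ∈ swapsOn S ∪ swapsOn Sᶜ := by
  obtain ⟨a, b, hab, rfl⟩ := hτ
  have ha : a ∈ S → b ∈ S := fun h => by simpa using hS a h
  have hb : b ∈ S → a ∈ S := fun h => by simpa using hS b h
  rw [mem_union, swap_mem_swapsOn hab, swap_mem_swapsOn hab, mem_compl, mem_compl]
  tauto

variable {β : Type*} [Fintype β] [DecidableEq β]

theorem swapsOn_eq_map {S : Finset β} (e : α ≃ {x // x ∈ S}) :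
    swapsOn S = (swapsOn univ).map ⟨_, Perm.extendDomainHom_injective e⟩ := by
  have val_ne {a b : α} (hab : a ≠ b) : (e a : β) ≠ e b :=
    fun h => hab (e.injective (Subtype.ext h))
  ext τ
  simp only [mem_map, Function.Embedding.coeFn_mk, Perm.extendDomainHom_apply]
  constructor
  · intro hτ
    obtain ⟨a, b, hab, rfl⟩ := (mem_swapsOn.1 hτ).1
    obtain ⟨ha, hb⟩ := (swap_mem_swapsOn hab).1 hτ
    refine ⟨swap (e.symm ⟨a, ha⟩) (e.symm ⟨b, hb⟩), ?_, by simp [extendDomain_swap]⟩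
    exact (swap_mem_swapsOn (by simpa using hab)).2 ⟨mem_univ _, mem_univ _⟩
  · rintro ⟨σ, hσ, rfl⟩
    obtain ⟨a, b, hab, rfl⟩ := (mem_swapsOn.1 hσ).1
    rw [extendDomain_swap, swap_mem_swapsOn (val_ne hab)]
    exact ⟨(e a).2, (e b).2⟩

end Transpositions

section Orbits

variable {α : Type*}

/-- The orbit of `x` under the group generated by the letters of a word. -/
def letterOrbit (l : List (Perm α)) (x : α) : Set α :=
  MulAction.orbit (Subgroup.closure {τ | τ ∈ l}) x

theorem mem_letterOrbit {l : List (Perm α)} {x y : α} :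
    y ∈ letterOrbit l x ↔ ∃ σ ∈ Subgroup.closure {τ | τ ∈ l}, σ x = y := by
  simp [letterOrbit, MulAction.mem_orbit_iff, Subgroup.smul_def]

theorem self_mem_letterOrbit (l : List (Perm α)) (x : α) : x ∈ letterOrbit l x :=
  MulAction.mem_orbit_self x

theorem apply_mem_letterOrbit {l : List (Perm α)} {τ : Perm α} (hτ : τ ∈ l) {x y : α} :
    τ y ∈ letterOrbit l x ↔ y ∈ letterOrbit l x :=
  let g : Subgroup.closure {τ | τ ∈ l} := ⟨τ, Subgroup.subset_closure hτ⟩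
  ⟨fun h => inv_smul_smul g y ▸ MulAction.mem_orbit_of_mem_orbit g⁻¹ h,
    MulAction.mem_orbit_of_mem_orbit g⟩

theorem letterOrbit_subset {l : List (Perm α)} {x : α} {T : Set α} (hx : x ∈ T)
    (hT : ∀ τ ∈ l, ∀ y, τ y ∈ T ↔ y ∈ T) : letterOrbit l x ⊆ T := by
  intro y hy
  obtain ⟨σ, hσ, rfl⟩ := mem_letterOrbit.1 hy
  suffices ∀ y, σ y ∈ T ↔ y ∈ T from (this x).2 hx
  clear hy
  induction hσ using Subgroup.closure_induction with
  | mem τ hτ => exact hT τ hτ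
  | one => simp
  | mul σ τ _ _ hσ hτ => exact fun y => (hσ (τ y)).trans (hτ y)
  | inv σ _ hσ =>
    exact fun y => by rw [← hσ (σ⁻¹ y), ← Perm.mul_apply, mul_inv_cancel, Perm.one_apply]

theorem letterOrbit_mono {l l' : List (Perm α)} (h : ∀ τ ∈ l, τ ∈ l') (x : α) :
    letterOrbit l x ⊆ letterOrbit l' x :=
  letterOrbit_subset (self_mem_letterOrbit l' x) fun τ hτ _ => apply_mem_letterOrbit (h τ hτ)

theorem letterOrbit_map_extendDomain {β : Type*} {p : β → Prop} [DecidablePred p]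
    (e : α ≃ Subtype p) (l : List (Perm α)) (x : α) :
    letterOrbit (l.map (Perm.extendDomainHom e)) (e x) =
      (fun y => (e y : β)) '' letterOrbit l x := by
  have letters : {τ | τ ∈ l.map (Perm.extendDomainHom e)} =
      Perm.extendDomainHom e '' {τ | τ ∈ l} := by
    ext τ
    simp
  ext y
  simp only [mem_letterOrbit, letters, ← MonoidHom.map_closure, Subgroup.mem_map, Set.mem_image]
  constructor
  · rintro ⟨_, ⟨σ, hσ, rfl⟩, rfl⟩
    exact ⟨σ x, ⟨σ, hσ, rfl⟩, (Perm.extendDomain_apply_image σ e x).symm⟩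
  · rintro ⟨_, ⟨σ, hσ, rfl⟩, rfl⟩
    exact ⟨_, ⟨σ, hσ, rfl⟩, Perm.extendDomain_apply_image σ e x⟩

variable [Fintype α] [DecidableEq α] {S : Finset α} {l : List (Perm α)}

theorem letterOrbit_filter_swapsOn (hl : ∀ τ ∈ l, τ ∈ swapsOn S ∪ swapsOn Sᶜ) {x : α}
    (hx : x ∈ S) : letterOrbit (l.filter (· ∈ swapsOn S)) x = letterOrbit l x := by
  have subset_S : letterOrbit (l.filter (· ∈ swapsOn S)) x ⊆ S :=
    letterOrbit_subset hx fun τ hτ =>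
      apply_mem_iff_of_mem_swapsOn (by simpa using (List.mem_filter.1 hτ).2)
  refine (letterOrbit_mono (fun τ hτ => (List.mem_filter.1 hτ).1) x).antisymm
    (letterOrbit_subset (self_mem_letterOrbit _ x) fun τ hτ y => ?_)
  obtain hS | hS := mem_union.1 (hl τ hτ)
  · exact apply_mem_letterOrbit (List.mem_filter.2 ⟨hτ, by simpa using hS⟩)
  · have fixed (z) (hz : z ∈ S) : τ z = z := by
      by_contra h
      exact mem_compl.1 ((mem_swapsOn.1 hS).2 (Perm.mem_support.2 h)) hz
    constructor <;> intro hy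
    · rwa [τ.injective (fixed (τ y) (subset_S hy))] at hy
    · rwa [fixed y (subset_S hy)]

theorem prod_filter_swapsOn (hl : ∀ τ ∈ l, τ ∈ swapsOn S ∪ swapsOn Sᶜ) :
    l.prod = (l.filter (· ∈ swapsOn S)).prod * (l.filter (· ∈ swapsOn Sᶜ)).prod := by
  have disj : Disjoint (swapsOn S) (swapsOn Sᶜ) := disjoint_swapsOn disjoint_compl_right
  induction l with
  | nil => simp
  | cons τ l ih =>
    obtain ⟨hτ, hl⟩ := List.forall_mem_cons.1 hl
    obtain hS | hS := mem_union.1 hτ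
    · simp [hS, disjoint_left.1 disj hS, ih hl, mul_assoc]
    · have commute : Commute τ (l.filter (· ∈ swapsOn S)).prod :=
        Commute.list_prod_right _ _ fun σ hσ => (disjoint_of_mem_swapsOn disjoint_compl_left hS
          (by simpa using (List.mem_filter.1 hσ).2)).commute
      simp [hS, disjoint_right.1 disj hS, ih hl, ← mul_assoc, commute.eq]

theorem prod_eq_one_iff_filter_swapsOn (hl : ∀ τ ∈ l, τ ∈ swapsOn S ∪ swapsOn Sᶜ) :
    l.prod = 1 ↔ (l.filter (· ∈ swapsOn S)).prod = 1 ∧ (l.filter (· ∈ swapsOn Sᶜ)).prod = 1 := by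
  rw [prod_filter_swapsOn hl, Perm.Disjoint.mul_eq_one_iff]
  refine Perm.disjoint_prod_right _ fun σ hσ => (Perm.disjoint_prod_right _ fun τ hτ => ?_).symm
  exact disjoint_of_mem_swapsOn disjoint_compl_left (by simpa using (List.mem_filter.1 hσ).2)
    (by simpa using (List.mem_filter.1 hτ).2)

end Orbits

end PermutationWords

section ExponentialFormula

open Finset PowerSeries Equiv

variable {α β : Type*} [Fintype α] [DecidableEq α] [Fintype β] [DecidableEq β]

open scoped Classical in
/-- The exponential generating series of the factorizations of the identity into transpositions of
letters of `S`. -/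
noncomputable def factorizationEGF (S : Finset α) : ℚ⟦X⟧ :=
  wordEGF (swapsOn S) fun l => if l.prod = 1 then 1 else 0

open scoped Classical in
/-- The exponential generating series of the factorizations of the identity into transpositions of
letters of `S` that move the base point `x` through all of `S`. -/
noncomputable def transitiveEGF (S : Finset α) (x : α) : ℚ⟦X⟧ :=
  wordEGF (swapsOn S) fun l => if l.prod = 1 ∧ letterOrbit l x = S then 1 else 0

theorem factorizationEGF_of_equiv {S : Finset β} (e : α ≃ {x // x ∈ S}) :
    factorizationEGF S = factorizationEGF (univ : Finset α) := by
  ext r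
  simp only [factorizationEGF, wordEGF, coeff_mk]
  rw [swapsOn_eq_map e, wordSum_map]
  simp [← map_list_prod]

theorem transitiveEGF_of_equiv {S : Finset β} (e : α ≃ {x // x ∈ S}) (x : α) :
    transitiveEGF S (e x) = transitiveEGF univ x := by
  have orbit_eq (O : Set α) : (fun y => (e y : β)) '' O = S ↔ O = Set.univ := by
    have image_univ : (fun y => (e y : β)) '' Set.univ = S := by
      ext y
      simp [e.exists_congr_left]
    rw [← image_univ]
    exact (Set.image_injective.2 (Subtype.val_injective.comp e.injective)).eq_iff
  ext r
  simp only [transitiveEGF, wordEGF, coeff_mk]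
  rw [swapsOn_eq_map e, wordSum_map]
  simp [← map_list_prod, letterOrbit_map_extendDomain, orbit_eq]

open scoped Classical in
theorem wordEGF_orbit_eq (S : Finset α) {x : α} (hx : x ∈ S) :
    wordEGF (swapsOn univ) (fun l => if l.prod = 1 ∧ letterOrbit l x = S then 1 else 0) =
      transitiveEGF S x * factorizationEGF Sᶜ := by
  have subset : swapsOn S ∪ swapsOn Sᶜ ⊆ swapsOn univ := fun τ hτ => by
    simp only [mem_union, mem_swapsOn] at hτ
    exact mem_swapsOn.2 ⟨by tauto, subset_univ _⟩
  rw [transitiveEGF, factorizationEGF, ← wordEGF_union (disjoint_swapsOn disjoint_compl_right)]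
  ext r
  rw [wordEGF, wordEGF, coeff_mk, coeff_mk, wordSum_eq_of_subset subset, wordSum_congr]
  · intro l hl
    simp only [prod_eq_one_iff_filter_swapsOn hl, letterOrbit_filter_swapsOn hl hx, mul_ite,
      mul_one, mul_zero, ← ite_and]
    exact if_congr (by tauto) rfl rfl
  · intro l hl hne τ hτ
    have orbit_eq : letterOrbit l x = S := by
      by_contra h
      exact hne (if_neg fun h' => h h'.2)
    refine mem_swapsOn_union_compl (mem_swapsOn.1 (hl τ hτ)).1 fun y hy => ?_
    rw [← mem_coe, ← orbit_eq] at hy ⊢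
    exact (apply_mem_letterOrbit hτ).2 hy

theorem factorizationEGF_univ_eq_sum (x : α) :
    factorizationEGF (univ : Finset α) =
      ∑ S : Finset α with x ∈ S, transitiveEGF S x * factorizationEGF Sᶜ := by
  classical
  have indicator_eq (l : List (Perm α)) : (if l.prod = 1 then 1 else 0 : ℚ) =
      ∑ S : Finset α with x ∈ S, if l.prod = 1 ∧ letterOrbit l x = S then 1 else 0 := by
    have orbit_eq (S : Finset α) : letterOrbit l x = S ↔ (letterOrbit l x).toFinset = S := by
      rw [← coe_inj, Set.coe_toFinset]
    split_ifs with h <;> simp [h, orbit_eq, self_mem_letterOrbit]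
  ext r
  rw [map_sum, ← sum_congr rfl fun S hS =>
    congrArg (coeff r) (wordEGF_orbit_eq S (mem_filter.1 hS).2)]
  simp only [factorizationEGF, wordEGF, coeff_mk, ← sum_div, ← wordSum_sum, indicator_eq]

/-- The exponential generating series, by length, of the tuples counted by
`hurwitzTupleCount d`. -/
noncomputable def hurwitzEGF (d : ℕ) : ℚ⟦X⟧ :=
  PowerSeries.mk fun r => (hurwitzTupleCount d r : ℚ) / r.factorial

theorem transitiveEGF_univ {d : ℕ} (x : Fin d) : transitiveEGF univ x = hurwitzEGF d := by
  classical
  have transitive_iff (r : ℕ) (v : Fin r → Perm (Fin d)) :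
      letterOrbit (List.ofFn v) x = Set.univ ↔
        ∀ y z : Fin d, ∃ σ ∈ Subgroup.closure (Set.range v), σ y = z := by
    simp only [Set.eq_univ_iff_forall, mem_letterOrbit, List.mem_ofFn]
    refine ⟨fun h y z => ?_, fun h => h x⟩
    obtain ⟨σ, hσ, rfl⟩ := h y
    obtain ⟨τ, hτ, rfl⟩ := h z
    exact ⟨τ * σ⁻¹, mul_mem hτ (inv_mem hσ), by simp⟩
  ext r
  rw [transitiveEGF, wordEGF, hurwitzEGF, coeff_mk, coeff_mk, wordSum_eq_sum_piFinset, sum_boole,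
    hurwitzTupleCount, Nat.card_eq_fintype_card, Fintype.card_subtype]
  congr 3
  ext v
  simp [transitive_iff, mem_swapsOn]

theorem natCast_mul_factorizationEGF (d : ℕ) :
    (d : ℚ⟦X⟧) * factorizationEGF (univ : Finset (Fin d)) =
      ∑ k ∈ range (d + 1), d.choose k •
        (k * hurwitzEGF k * factorizationEGF (univ : Finset (Fin (d - k)))) := by
  have term (S : Finset (Fin d)) : ∑ x ∈ S, transitiveEGF S x * factorizationEGF Sᶜ =
      #S * hurwitzEGF #S * factorizationEGF (univ : Finset (Fin (d - #S))) := by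
    have transitive (x) (hx : x ∈ S) : transitiveEGF S x = hurwitzEGF #S := by
      rw [← transitiveEGF_univ (S.equivFin ⟨x, hx⟩), ← transitiveEGF_of_equiv S.equivFin.symm,
        symm_apply_apply]
    have card_compl : #Sᶜ = d - #S := by rw [card_compl, Fintype.card_fin]
    rw [← sum_mul, sum_congr rfl transitive, sum_const, nsmul_eq_mul,
      factorizationEGF_of_equiv Sᶜ.equivFin.symm, card_compl]
  calc (d : ℚ⟦X⟧) * factorizationEGF (univ : Finset (Fin d))
      = ∑ _x : Fin d, factorizationEGF (univ : Finset (Fin d)) := by simp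
    _ = ∑ x : Fin d, ∑ S : Finset (Fin d) with x ∈ S, transitiveEGF S x * factorizationEGF Sᶜ :=
        sum_congr rfl fun x _ => factorizationEGF_univ_eq_sum x
    _ = ∑ S : Finset (Fin d), ∑ x ∈ S, transitiveEGF S x * factorizationEGF Sᶜ :=
        sum_comm' (by simp)
    _ = _ := by
        rw [← powerset_univ, sum_congr rfl fun S _ => term S, sum_powerset_apply_card fun k =>
          (k : ℚ⟦X⟧) * hurwitzEGF k * factorizationEGF (univ : Finset (Fin (d - k)))]
        simp

/-- The series `∑ y ^ d / d! ∑ t ^ r / r!` over all factorizations of the identity of `S_d` into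
`r` transpositions; the outer variable is `y` and the inner one is `t`. -/
noncomputable def factorizationSeries : ℚ⟦X⟧⟦X⟧ :=
  PowerSeries.mk fun d => (d.factorial : ℚ)⁻¹ • factorizationEGF (univ : Finset (Fin d))

/-- The part of `factorizationSeries` counting the transitive factorizations. -/
noncomputable def hurwitzSeries : ℚ⟦X⟧⟦X⟧ :=
  PowerSeries.mk fun d => (d.factorial : ℚ)⁻¹ • hurwitzEGF d

-- This says that `factorizationSeries` is the exponential of `hurwitzSeries`.
theorem eulerDerivation_factorizationSeries :
    eulerDerivation ℚ⟦X⟧ factorizationSeries =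
      factorizationSeries * eulerDerivation ℚ⟦X⟧ hurwitzSeries := by
  ext1 d
  rw [coeff_eulerDerivation, mul_comm, mul_comm factorizationSeries, coeff_mul,
    Nat.sum_antidiagonal_eq_sum_range_succ_mk]
  simp only [coeff_eulerDerivation, factorizationSeries, hurwitzSeries, coeff_mk, smul_mul_assoc]
  rw [mul_comm, natCast_mul_factorizationEGF, smul_sum]
  refine sum_congr rfl fun k hk => ?_
  have choose_eq : (d.factorial : ℚ)⁻¹ * d.choose k =
      (k.factorial : ℚ)⁻¹ * ((d - k).factorial : ℚ)⁻¹ := by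
    rw [Nat.cast_choose ℚ (mem_range_succ_iff.1 hk)]
    field_simp
  rw [← Nat.cast_smul_eq_nsmul ℚ, smul_smul, choose_eq]
  simp only [mul_smul_comm, smul_mul_assoc, smul_smul]
  rw [mul_comm (k.factorial : ℚ)⁻¹]

end ExponentialFormula

section TensorPowers

open Finset Matrix Equiv

theorem sum_swap_eq_two_nsmul {α M : Type*} [Fintype α] [DecidableEq α] [AddCommMonoid M]
    (f : Perm α → M) :
    ∑ p : α × α with p.1 ≠ p.2, f (swap p.1 p.2) = 2 • ∑ τ ∈ swapsOn univ, f τ := by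
  have mem (p : α × α) (hp : p ∈ ({p | p.1 ≠ p.2} : Finset (α × α))) :
      swap p.1 p.2 ∈ swapsOn univ :=
    (swap_mem_swapsOn (by simpa using hp)).2 ⟨mem_univ _, mem_univ _⟩
  rw [smul_sum, ← sum_fiberwise_of_maps_to mem]
  refine sum_congr rfl fun τ hτ => ?_
  obtain ⟨a, b, hab, rfl⟩ := (mem_swapsOn.1 hτ).1
  have fiber : ({p ∈ ({p | p.1 ≠ p.2} : Finset (α × α)) | Equiv.swap p.1 p.2 = Equiv.swap a b}) =
      {(a, b), (b, a)} := by
    ext ⟨x, y⟩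
    simp only [mem_filter, mem_univ, true_and, mem_insert, mem_singleton, Prod.mk.injEq]
    refine ⟨fun ⟨_, h⟩ => ?_, ?_⟩
    · have hx := congrArg (· x) h
      have hy := congrArg (· y) h
      simp only [swap_apply_left, swap_apply_right, swap_apply_def] at hx hy
      grind
    · rintro (⟨rfl, rfl⟩ | ⟨rfl, rfl⟩)
      · exact ⟨hab, rfl⟩
      · exact ⟨hab.symm, Equiv.swap_comm _ _⟩
  rw [fiber, sum_pair (by simp [hab]), Equiv.swap_comm b a, two_nsmul]

section TensorPower

variable {α σ : Type*} [Fintype α] [DecidableEq α] [DecidableEq σ]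

/-- The action of the elementary matrix `e i j` on the tensor factor `z`. -/
def slotMatrix (z : α) (i j : σ) : Matrix (α → σ) (α → σ) ℚ :=
  of fun w w' => if w z = i then if Function.update w z j = w' then 1 else 0 else 0

theorem slotMatrix_apply (z : α) (i j : σ) (w w' : α → σ) : slotMatrix z i j w w' =
    if w z = i then if Function.update w z j = w' then 1 else 0 else 0 :=
  rfl

/-- The action of the element `e i j` of the Lie algebra `gl σ` on the tensor power. -/
def glMatrix (α : Type*) [Fintype α] [DecidableEq α] (i j : σ) : Matrix (α → σ) (α → σ) ℚ :=
  ∑ z, slotMatrix z i j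

theorem glMatrix_self (i : σ) :
    glMatrix α i i = diagonal fun w => (#{z | w z = i} : ℚ) := by
  ext w w'
  have slot (z : α) : slotMatrix z i i w w' = if w = w' then if w z = i then 1 else 0 else 0 := by
    rw [slotMatrix_apply]
    obtain rfl | hz := eq_or_ne (w z) i
    · simp
    · simp [hz]
  simp only [glMatrix, Matrix.sum_apply, slot, diagonal_apply, card_filter, Nat.cast_sum]
  split_ifs <;> simp

variable [Fintype σ]

/-- The action of permutations of `α` on the tensor power `(ℚ ^ σ) ^ ⊗ α`, whose basis is indexed
by `α → σ`. -/
def tensorPerm : Perm α →* Matrix (α → σ) (α → σ) ℚ where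
  toFun ρ := of fun w w' => if w ∘ ρ = w' then 1 else 0
  map_one' := by
    ext w w'
    simp [Matrix.one_apply]
  map_mul' ρ τ := by
    ext w w'
    simp only [Matrix.mul_apply, of_apply, ite_mul, one_mul, zero_mul, sum_ite_eq, mem_univ,
      if_true]
    rfl

theorem tensorPerm_mul_apply (ρ : Perm α) (B : Matrix (α → σ) (α → σ) ℚ) (w w' : α → σ) :
    (tensorPerm ρ * B : Matrix (α → σ) (α → σ) ℚ) w w' = B (w ∘ ρ) w' := by
  simp [Matrix.mul_apply, tensorPerm]

theorem tensorPerm_apply (ρ : Perm α) (w w' : α → σ) :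
    tensorPerm ρ w w' = if w ∘ ρ = w' then 1 else 0 :=
  rfl

theorem trace_tensorPerm (ρ : Perm α) :
    (tensorPerm ρ : Matrix (α → σ) (α → σ) ℚ).trace = #{w : α → σ | w ∘ ρ = w} := by
  simp [trace, tensorPerm_apply]

theorem slotMatrix_mul_apply (z : α) (i j : σ) (B : Matrix (α → σ) (α → σ) ℚ) (w w' : α → σ) :
    (slotMatrix z i j * B) w w' = if w z = i then B (Function.update w z j) w' else 0 := by
  split_ifs with h <;> simp [Matrix.mul_apply, slotMatrix, h]

theorem slotMatrix_mul_self (z : α) (i j : σ) :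
    slotMatrix z i j * slotMatrix z j i = slotMatrix z i i := by
  ext w w'
  simp [slotMatrix_mul_apply, slotMatrix_apply]

theorem slotMatrix_mul_of_ne {z z' : α} (hz : z ≠ z') (i j : σ) :
    slotMatrix z i j * slotMatrix z' j i =
      diagonal (fun w => if w z = i ∧ w z' = j then 1 else 0) * tensorPerm (swap z z') := by
  ext w w'
  rw [slotMatrix_mul_apply, diagonal_mul, tensorPerm_apply, slotMatrix_apply,
    Function.update_of_ne hz.symm]
  by_cases hw : w z = i ∧ w z' = j
  · obtain ⟨rfl, rfl⟩ := hw
    have update_eq : Function.update (Function.update w z (w z')) z' (w z) = w ∘ swap z z' := by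
      ext y
      rw [Function.comp_apply, swap_apply_def]
      split_ifs with hy hy' <;> simp_all
    simp [update_eq]
  · rw [if_neg hw, zero_mul]
    split_ifs <;> simp_all

theorem tensorPerm_mul_slotMatrix (ρ : Perm α) (z : α) (i j : σ) :
    tensorPerm ρ * slotMatrix z i j = slotMatrix (ρ z) i j * tensorPerm ρ := by
  ext w w'
  simp [tensorPerm_mul_apply, slotMatrix_mul_apply, slotMatrix_apply, tensorPerm_apply,
    Function.update_comp_eq_of_injective _ ρ.injective]

theorem commute_glMatrix_tensorPerm (ρ : Perm α) (i j : σ) :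
    Commute (glMatrix α i j) (tensorPerm ρ) := by
  rw [commute_iff_eq, glMatrix, sum_mul, mul_sum, ← Equiv.sum_comp ρ]
  exact sum_congr rfl fun z _ => (tensorPerm_mul_slotMatrix ρ z i j).symm

theorem glMatrix_mul_glMatrix (i j : σ) :
    glMatrix α i j * glMatrix α j i = glMatrix α i i + ∑ p : α × α with p.1 ≠ p.2,
      diagonal (fun w => if w p.1 = i ∧ w p.2 = j then 1 else 0) * tensorPerm (swap p.1 p.2) := by
  simp only [glMatrix, sum_mul_sum]
  rw [← sum_product', univ_product_univ, ← sum_filter_add_sum_filter_not _ fun p => p.1 = p.2]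
  refine congrArg₂ _ ?_ (sum_congr rfl fun p hp => slotMatrix_mul_of_ne (by simpa using hp) i j)
  simp [sum_filter, ← univ_product_univ, sum_product, slotMatrix_mul_self]

theorem glMatrix_commutator (i j : σ) :
    glMatrix α i j * glMatrix α j i + glMatrix α j j =
      glMatrix α j i * glMatrix α i j + glMatrix α i i := by
  have symm : ∑ p : α × α with p.1 ≠ p.2,
      diagonal (fun w : α → σ => if w p.1 = i ∧ w p.2 = j then (1 : ℚ) else 0) *
        tensorPerm (swap p.1 p.2) = ∑ p : α × α with p.1 ≠ p.2,
      diagonal (fun w => if w p.1 = j ∧ w p.2 = i then 1 else 0) * tensorPerm (swap p.1 p.2) := by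
    refine sum_equiv (prodComm α α) (by simp [ne_comm]) fun p _ => ?_
    simp [and_comm, Equiv.swap_comm p.1]
  rw [glMatrix_mul_glMatrix, glMatrix_mul_glMatrix, symm]
  abel

/-- The sum of all transpositions, acting on the tensor power. -/
noncomputable def transpositionSum (α σ : Type*) [Fintype α] [DecidableEq α] [Fintype σ]
    [DecidableEq σ] : Matrix (α → σ) (α → σ) ℚ :=
  ∑ τ ∈ swapsOn univ, tensorPerm τ

theorem commute_glMatrix_transpositionSum (i j : σ) :
    Commute (glMatrix α i j) (transpositionSum α σ) :=
  Commute.sum_right _ _ _ fun τ _ => commute_glMatrix_tensorPerm τ i j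

theorem sum_glMatrix_self : ∑ i : σ, glMatrix α i i = (Fintype.card α : ℚ) • 1 := by
  simp only [glMatrix_self]
  ext w w'
  rw [Matrix.sum_apply, Matrix.smul_apply, one_apply]
  split_ifs with h
  · subst h
    simp only [diagonal_apply_eq, smul_eq_mul, mul_one]
    rw [← Nat.cast_sum, sum_card_fiberwise_eq_card_filter]
    simp
  · simp [h]

theorem sum_glMatrix_mul_glMatrix :
    ∑ i : σ, ∑ j : σ, glMatrix α i j * glMatrix α j i =
      (Fintype.card σ * Fintype.card α : ℚ) • 1 + 2 • transpositionSum α σ := by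
  have partition (p : α × α) : ∑ i : σ, ∑ j : σ,
      diagonal (fun w : α → σ => if w p.1 = i ∧ w p.2 = j then (1 : ℚ) else 0) = 1 := by
    ext w w'
    obtain rfl | h := eq_or_ne w w'
    · simp [Matrix.sum_apply, ite_and]
    · simp [h, Matrix.sum_apply]
  have offdiag : ∑ i : σ, ∑ j : σ, ∑ p : α × α with p.1 ≠ p.2,
      diagonal (fun w : α → σ => if w p.1 = i ∧ w p.2 = j then (1 : ℚ) else 0) *
        tensorPerm (Equiv.swap p.1 p.2) = 2 • transpositionSum α σ := by
    rw [transpositionSum, ← sum_swap_eq_two_nsmul]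
    simp_rw [sum_comm (t := filter _ univ), ← sum_mul, partition, one_mul]
  simp only [glMatrix_mul_glMatrix, sum_add_distrib, sum_const, card_univ, offdiag]
  rw [← smul_sum, sum_glMatrix_self, ← Nat.cast_smul_eq_nsmul ℚ, smul_smul]

end TensorPower

end TensorPowers

section RadialParts

open Finset Matrix MvPolynomial

section EulerPartial

variable {σ : Type*}

/-- The derivation `X i * ∂ / ∂ X i`, which multiplies a monomial by its exponent at `i`. -/
noncomputable def eulerPartial (i : σ) : Derivation ℚ (MvPolynomial σ ℚ) (MvPolynomial σ ℚ) :=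
  (X i : MvPolynomial σ ℚ) • pderiv i

theorem eulerPartial_monomial (i : σ) (e : σ →₀ ℕ) (c : ℚ) :
    eulerPartial i (monomial e c) = (e i : ℚ) • monomial e c := by
  rw [eulerPartial, Derivation.smul_apply, smul_eq_mul, X_mul_pderiv_monomial,
    Nat.cast_smul_eq_nsmul]

theorem eulerPartial_X [DecidableEq σ] (i k : σ) :
    eulerPartial i (X k : MvPolynomial σ ℚ) = if k = i then X k else 0 := by
  rw [eulerPartial, Derivation.smul_apply, pderiv_X, Pi.single_apply]
  aesop

/-- The operator `∑ i, (X i * ∂ / ∂ X i) ^ 2`, the radial part of the Laplacian of `gl σ`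
up to conjugation by the Vandermonde determinant. -/
noncomputable def radialLaplacian (σ : Type*) [Fintype σ] :
    MvPolynomial σ ℚ →ₗ[ℚ] MvPolynomial σ ℚ :=
  ∑ i, (eulerPartial i).toLinearMap ∘ₗ (eulerPartial i).toLinearMap

variable [Fintype σ]

theorem radialLaplacian_apply (f : MvPolynomial σ ℚ) :
    radialLaplacian σ f = ∑ i, eulerPartial i (eulerPartial i f) := by
  simp [radialLaplacian]

theorem radialLaplacian_monomial (e : σ →₀ ℕ) (c : ℚ) :
    radialLaplacian σ (monomial e c) = (∑ i, (e i : ℚ) ^ 2) • monomial e c := by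
  simp_rw [radialLaplacian_apply, eulerPartial_monomial, Derivation.map_smul,
    eulerPartial_monomial, smul_smul, ← sum_smul, sq]

theorem radialLaplacian_mul (f g : MvPolynomial σ ℚ) :
    radialLaplacian σ (f * g) = radialLaplacian σ f * g +
      2 * ∑ i, eulerPartial i g * eulerPartial i f + f * radialLaplacian σ g := by
  simp only [radialLaplacian_apply, Derivation.leibniz, map_add, smul_eq_mul, sum_add_distrib,
    sum_mul, mul_sum, two_mul]
  simp only [← sum_add_distrib]
  exact sum_congr rfl fun i _ => by ring

end EulerPartial

theorem derivation_prod_of_eigenvectors {R A ι : Type*} [CommRing R] [CommRing A] [Algebra R A]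
    (D : Derivation R A A) (s : Finset ι) (f k : ι → A) (h : ∀ i ∈ s, D (f i) = k i * f i) :
    D (∏ i ∈ s, f i) = (∑ i ∈ s, k i) * ∏ i ∈ s, f i := by
  classical
  induction s using Finset.induction_on with
  | empty => simp
  | insert a s ha ih =>
    rw [prod_insert ha, sum_insert ha, Derivation.leibniz, smul_eq_mul, smul_eq_mul,
      ih fun i hi => h i (mem_insert_of_mem hi), h a (mem_insert_self a s)]
    ring

theorem det_vandermonde_X_eq_sum_monomial (N : ℕ) :
    det (vandermonde (X : Fin N → MvPolynomial (Fin N) ℚ)) =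
      ∑ π : Equiv.Perm (Fin N), (π.sign : ℤ) •
        monomial (Finsupp.equivFunOnFinite.symm fun j => (π j : ℕ)) (1 : ℚ) := by
  rw [← det_transpose, det_apply]
  refine sum_congr rfl fun π _ => ?_
  rw [monomial_eq, Finsupp.prod_fintype _ _ (by simp)]
  simp [Units.smul_def]

theorem radialLaplacian_vandermonde (N : ℕ) :
    radialLaplacian (Fin N) (det (vandermonde X)) =
      (∑ i ∈ range N, (i : ℚ) ^ 2) • det (vandermonde X) := by
  rw [det_vandermonde_X_eq_sum_monomial, map_sum, smul_sum]
  refine sum_congr rfl fun π _ => ?_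
  rw [map_zsmul, radialLaplacian_monomial, smul_comm, ← Fin.sum_univ_eq_sum_range,
    ← Equiv.sum_comp π fun i => ((i : ℕ) : ℚ) ^ 2]
  simp

section Character

variable {α σ : Type*} [Fintype α]

/-- The weight of the basis vector `w` of the tensor power. -/
noncomputable def weightMonomial (w : α → σ) : MvPolynomial σ ℚ :=
  ∏ z, X (w z)

theorem weightMonomial_eq_monomial (w : α → σ) :
    weightMonomial w = monomial (∑ z, Finsupp.single (w z) 1) 1 := by
  rw [weightMonomial, monomial_sum_one]
  rfl

variable [DecidableEq α]

theorem X_mul_weightMonomial_update (w : α → σ) (z : α) (j : σ) :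
    X (w z) * weightMonomial (Function.update w z j) = X j * weightMonomial w := by
  rw [weightMonomial, weightMonomial, ← mul_prod_erase _ _ (mem_univ z),
    ← mul_prod_erase _ (fun y => X (w y)) (mem_univ z), Function.update_self, mul_left_comm]
  congr 2
  exact prod_congr rfl fun y hy => by rw [Function.update_of_ne (ne_of_mem_erase hy)]

variable [Fintype σ]

/-- The trace of `x ^ ⊗ α * B`, where `x` is the generic diagonal matrix. -/
noncomputable def character :
    Matrix (α → σ) (α → σ) ℚ →ₗ[ℚ] MvPolynomial σ ℚ where
  toFun B := ∑ w, B w w • weightMonomial w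
  map_add' B B' := by simp [add_smul, sum_add_distrib]
  map_smul' c B := by simp [smul_sum, mul_smul]

theorem character_apply (B : Matrix (α → σ) (α → σ) ℚ) :
    character B = ∑ w, B w w • weightMonomial w :=
  rfl

theorem eval_one_character (B : Matrix (α → σ) (α → σ) ℚ) :
    eval 1 (character B) = B.trace := by
  simp [character_apply, weightMonomial, Matrix.trace, smul_eval]

variable [DecidableEq σ]

theorem character_one :
    character (1 : Matrix (α → σ) (α → σ) ℚ) = (∑ i, X i) ^ Fintype.card α := by
  rw [← card_univ, ← prod_const, Fintype.prod_sum]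
  simp [character_apply, weightMonomial]

theorem X_mul_character_slotMatrix_mul (z : α) (i j : σ) (B : Matrix (α → σ) (α → σ) ℚ) :
    X j * character (slotMatrix z i j * B) = X i * character (B * slotMatrix z i j) := by
  have swap_sums : character (B * slotMatrix z i j) =
      ∑ w, ∑ w', (B w' w * slotMatrix z i j w w') • weightMonomial w' := by
    simp only [character_apply, Matrix.mul_apply, sum_smul]
    exact sum_comm
  rw [swap_sums, character_apply, mul_sum, mul_sum]
  refine sum_congr rfl fun w _ => ?_
  rw [slotMatrix_mul_apply]
  obtain rfl | h := eq_or_ne (w z) i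
  · simp [slotMatrix_apply, X_mul_weightMonomial_update]
  · simp [slotMatrix_apply, h]

theorem X_mul_character_glMatrix_mul (i j : σ) (B : Matrix (α → σ) (α → σ) ℚ) :
    X j * character (glMatrix α i j * B) = X i * character (B * glMatrix α i j) := by
  simp only [glMatrix, Matrix.sum_mul, map_sum, mul_sum,
    X_mul_character_slotMatrix_mul]

theorem eulerPartial_character (i : σ) (B : Matrix (α → σ) (α → σ) ℚ) :
    eulerPartial i (character B) = character (glMatrix α i i * B) := by
  have exponent (w : α → σ) : (∑ z, Finsupp.single (w z) 1 : σ →₀ ℕ) i = #{z | w z = i} := by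
    simp [Finsupp.finsetSum_apply, Finsupp.single_apply]
  simp only [character_apply, map_sum, Derivation.map_smul, weightMonomial_eq_monomial,
    eulerPartial_monomial, glMatrix_self, diagonal_mul, exponent, smul_smul, mul_comm]

/-- The quotient of `(X i * ∂ / ∂ X i - X j * ∂ / ∂ X j) χ` by `X i - X j`, for the character `χ`
of an operator `A` commuting with `gl σ`. -/
noncomputable def rootQuotient (A : Matrix (α → σ) (α → σ) ℚ) (i j : σ) : MvPolynomial σ ℚ :=
  character ((glMatrix α i j * glMatrix α j i + glMatrix α j j) * A)

theorem rootQuotient_comm (A : Matrix (α → σ) (α → σ) ℚ) (i j : σ) :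
    rootQuotient A i j = rootQuotient A j i := by
  rw [rootQuotient, rootQuotient, glMatrix_commutator]

theorem X_sub_X_mul_rootQuotient {A : Matrix (α → σ) (α → σ) ℚ}
    (hA : ∀ i j, Commute (glMatrix α i j) A) (i j : σ) :
    (X i - X j) * rootQuotient A i j =
      X i * eulerPartial i (character A) - X j * eulerPartial j (character A) := by
  have cyclic : X j * character (glMatrix α i j * glMatrix α j i * A) =
      X i * character (glMatrix α j i * glMatrix α i j * A) := by
    rw [Matrix.mul_assoc, X_mul_character_glMatrix_mul, Matrix.mul_assoc, Matrix.mul_assoc,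
      (hA i j).eq]
  have commutator := congrArg (fun E => X i * character (E * A)) (glMatrix_commutator (α := α) i j)
  simp only [Matrix.add_mul, map_add] at commutator
  simp only [rootQuotient, Matrix.add_mul, map_add, eulerPartial_character]
  linear_combination commutator - cyclic

theorem sum_rootQuotient (A : Matrix (α → σ) (α → σ) ℚ) :
    ∑ i, ∑ j ∈ {i}ᶜ, rootQuotient A i j =
      ((2 * Fintype.card σ - 1) * Fintype.card α : ℚ) • character A +
        2 • character (transpositionSum α σ * A) - radialLaplacian σ (character A) := by
  have casimir := congrArg (fun E => character (E * A))
    (sum_glMatrix_mul_glMatrix (α := α) (σ := σ))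
  have trace := congrArg (fun E => character (E * A)) (sum_glMatrix_self (α := α) (σ := σ))
  have cartan : radialLaplacian σ (character A) =
      ∑ i, character (glMatrix α i i * glMatrix α i i * A) := by
    simp only [radialLaplacian_apply, eulerPartial_character, Matrix.mul_assoc]
  simp only [Matrix.sum_mul, Matrix.add_mul, Matrix.smul_mul, Matrix.one_mul, map_sum, map_add,
    map_smul, map_nsmul] at casimir trace
  simp only [rootQuotient, Matrix.add_mul, map_add, compl_singleton,
    sum_erase_eq_sub (mem_univ _), sum_sub_distrib, sum_add_distrib, sum_const, card_univ, casimir,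
    trace, cartan]
  module

theorem two_mul_sum_eulerPartial_vandermonde {N : ℕ}
    {A : Matrix (α → Fin N) (α → Fin N) ℚ} (hA : ∀ i j, Commute (glMatrix α i j) A) :
    2 * ∑ i, eulerPartial i (character A) *
        eulerPartial i (det (vandermonde (X : Fin N → MvPolynomial (Fin N) ℚ))) =
      (∑ i, ∑ j ∈ {i}ᶜ, rootQuotient A i j) * det (vandermonde X) := by
  -- The derivation `E` has every factor of the Vandermonde product as an eigenvector.
  let E : Derivation ℚ (MvPolynomial (Fin N) ℚ) (MvPolynomial (Fin N) ℚ) :=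
    ∑ i, eulerPartial i (character A) • eulerPartial i
  have E_apply (f : MvPolynomial (Fin N) ℚ) :
      E f = ∑ i, eulerPartial i (character A) * eulerPartial i f := by
    rw [← Derivation.coeFnAddMonoidHom_apply, map_sum, Finset.sum_apply]
    simp
  have E_X (k : Fin N) : E (X k) = X k * eulerPartial k (character A) := by
    simp [E_apply, eulerPartial_X, mul_comm]
  have E_factor (i j : Fin N) : E (X j - X i) = rootQuotient A j i * (X j - X i) := by
    rw [map_sub, E_X, E_X, mul_comm (rootQuotient A j i), X_sub_X_mul_rootQuotient hA]
  have E_vandermonde : E (det (vandermonde X)) =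
      (∑ i, ∑ j ∈ Ioi i, rootQuotient A j i) * det (vandermonde X) := by
    rw [det_vandermonde]
    exact derivation_prod_of_eigenvectors _ _ _ _ fun i _ =>
      derivation_prod_of_eigenvectors _ _ _ _ fun j _ => E_factor i j
  have symm : ∑ i, ∑ j ∈ {i}ᶜ, rootQuotient A i j =
      2 * ∑ i, ∑ j ∈ Ioi i, rootQuotient A j i := by
    rw [← sum_sum_Ioi_add_eq_sum_sum_off_diag fun i j => rootQuotient A j i]
    simp_rw [mul_sum, two_mul, rootQuotient_comm A _ _]
  rw [symm, mul_assoc, ← E_vandermonde, E_apply]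

/-- The eigenvalue of the radial Laplacian on the Vandermonde determinant, plus the scalar part
`(2 * N - 1) * d` of the Casimir element of `gl N` on the `d`-th tensor power. -/
def casimirShift (N d : ℕ) : ℚ :=
  ∑ i ∈ range N, (i : ℚ) ^ 2 + (2 * N - 1) * d

theorem radialLaplacian_vandermonde_mul_character {N : ℕ}
    {A : Matrix (α → Fin N) (α → Fin N) ℚ} (hA : ∀ i j, Commute (glMatrix α i j) A) :
    radialLaplacian (Fin N) (det (vandermonde X) * character A) =
      det (vandermonde X) * character (2 • (transpositionSum α (Fin N) * A) +
        casimirShift N (Fintype.card α) • A) := by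
  rw [radialLaplacian_mul, two_mul_sum_eulerPartial_vandermonde hA, sum_rootQuotient,
    radialLaplacian_vandermonde, Fintype.card_fin, map_add, map_nsmul, map_smul]
  simp only [Algebra.smul_def, map_add, casimirShift]
  ring

end Character

end RadialParts

section Moments

open Finset Matrix MvPolynomial

theorem inv_factorial_smul_sum_X_pow {σ : Type*} [Fintype σ] [DecidableEq σ] (d : ℕ) :
    (d.factorial : ℚ)⁻¹ • (∑ j : σ, X j : MvPolynomial σ ℚ) ^ d =
      ∑ e ∈ finsuppAntidiag univ d, monomial e (∏ j, ((e j).factorial : ℚ)⁻¹) := by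
  rw [← coeff_expSeries, expSeries_sum, PowerSeries.coeff_prod]
  refine sum_congr rfl fun e _ => ?_
  simp_rw [coeff_expSeries]
  rw [prod_smul, monomial_eq, Finsupp.prod_fintype _ _ (by simp), smul_eq_C_mul]

section MomentFunctional

variable {A : Type*} [CommRing A] [Algebra ℚ A]

/-- The linear functional sending the monomial with exponent `e` to `∏ j, e j ^ j * q (e j)`. -/
noncomputable def momentFunctional (N : ℕ) (q : ℕ → A) :
    MvPolynomial (Fin N) ℚ →ₗ[ℚ] A :=
  (basisMonomials (Fin N) ℚ).constr ℚ fun e => ∏ j, ((e j : A) ^ (j : ℕ) * q (e j))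

theorem momentFunctional_monomial {N : ℕ} (q : ℕ → A) (e : Fin N →₀ ℕ) (c : ℚ) :
    momentFunctional N q (monomial e c) = c • ∏ j, ((e j : A) ^ (j : ℕ) * q (e j)) := by
  have basis : monomial e (1 : ℚ) = basisMonomials (Fin N) ℚ e := by
    rw [coe_basisMonomials]
  rw [← mul_one c, ← smul_eq_mul, ← smul_monomial, map_smul, basis, momentFunctional,
    Module.Basis.constr_basis, smul_eq_mul, mul_one]

theorem coeff_det_shiftedMomentMatrix (q : ℕ → A) (N d : ℕ) :
    PowerSeries.coeff d (shiftedMomentMatrix q N).det =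
      (d.factorial : ℚ)⁻¹ • momentFunctional N q (det (vandermonde X) * (∑ j, X j) ^ d) := by
  rw [← map_smul, ← mul_smul_comm, inv_factorial_smul_sum_X_pow, det_vandermonde_X_eq_sum_monomial,
    det_apply, sum_mul, map_sum, map_sum]
  refine sum_congr rfl fun π _ => ?_
  rw [smul_mul_assoc, map_zsmul, Units.smul_def, map_zsmul, PowerSeries.coeff_prod, mul_sum,
    map_sum]
  refine congrArg _ (sum_congr rfl fun e _ => ?_)
  rw [monomial_mul, one_mul, momentFunctional_monomial, ← prod_smul]
  simp [shiftedMomentMatrix, add_comm]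

theorem momentFunctional_one_vandermonde_mul {N : ℕ} (f : MvPolynomial (Fin N) ℚ) :
    momentFunctional N (fun _ => (1 : ℚ)) (det (vandermonde X) * f) =
      det (vandermonde fun i : Fin N => (i : ℚ)) * eval 1 f := by
  induction f using MvPolynomial.induction_on' with
  | add f g hf hg => rw [mul_add, map_add, hf, hg, map_add, mul_add]
  | monomial e c =>
    rw [det_eval_matrixOfPolynomials_eq_det_vandermonde _
        (fun j : Fin N => (Polynomial.X + Polynomial.C (e j : ℚ)) ^ (j : ℕ))
        (fun j => by rw [Polynomial.natDegree_pow, Polynomial.natDegree_X_add_C, mul_one])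
        (fun j => (Polynomial.monic_X_add_C _).pow _),
      det_vandermonde_X_eq_sum_monomial, det_apply, sum_mul, sum_mul, map_sum]
    refine sum_congr rfl fun π _ => ?_
    rw [smul_mul_assoc, map_zsmul, monomial_mul, momentFunctional_monomial, Units.smul_def]
    have eval_one : eval 1 (monomial e c) = c := by simp [eval_monomial]
    simp only [zsmul_eq_mul, one_mul, mul_one, smul_eq_mul, eval_one]
    simp [mul_comm, mul_assoc]

end MomentFunctional

section RadialPower

variable {α : Type*} [Fintype α] [DecidableEq α]

/-- The operator which, on products of the Vandermonde determinant and a character, is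
multiplication by the sum of all transpositions. -/
noncomputable def transpositionOperator (N d : ℕ) : Module.End ℚ (MvPolynomial (Fin N) ℚ) :=
  (2⁻¹ : ℚ) • (radialLaplacian (Fin N) - casimirShift N d • LinearMap.id)

theorem transpositionOperator_pow_vandermonde_mul (N r : ℕ) :
    (transpositionOperator N (Fintype.card α) ^ r)
        (det (vandermonde X) * (∑ j, X j) ^ Fintype.card α) =
      det (vandermonde X) * character (transpositionSum α (Fin N) ^ r) := by
  induction r with
  | zero => simp [character_one]
  | succ r ih =>
    have comm (i j : Fin N) : Commute (glMatrix α i j) (transpositionSum α (Fin N) ^ r) :=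
      (commute_glMatrix_transpositionSum i j).pow_right r
    rw [pow_succ', Module.End.mul_apply, ih, transpositionOperator, LinearMap.smul_apply,
      LinearMap.sub_apply, radialLaplacian_vandermonde_mul_character comm, pow_succ']
    simp only [map_add, map_nsmul, map_smul, LinearMap.smul_apply, LinearMap.id_apply, mul_add,
      mul_smul_comm, add_sub_cancel_right]
    rw [← Nat.cast_smul_eq_nsmul ℚ, smul_smul]
    simp

theorem transpositionOperator_pow_monomial (N d r : ℕ) (e : Fin N →₀ ℕ) (c : ℚ) :
    (transpositionOperator N d ^ r) (monomial e c) =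
      (2⁻¹ * (∑ j, (e j : ℚ) ^ 2 - casimirShift N d)) ^ r • monomial e c := by
  induction r with
  | zero => simp
  | succ r ih =>
    rw [pow_succ', Module.End.mul_apply, ih, map_smul, transpositionOperator,
      LinearMap.smul_apply, LinearMap.sub_apply, radialLaplacian_monomial, LinearMap.smul_apply,
      LinearMap.id_apply, ← sub_smul, smul_smul, smul_smul, pow_succ, mul_assoc]

theorem momentFunctional_expSeries (N d : ℕ) (f : MvPolynomial (Fin N) ℚ) :
    momentFunctional N (fun n => expSeries ((n : ℚ) ^ 2 / 2)) f =
      expSeries (casimirShift N d / 2) *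
        PowerSeries.mk fun r => (r.factorial : ℚ)⁻¹ *
          momentFunctional N (fun _ => (1 : ℚ)) ((transpositionOperator N d ^ r) f) := by
  induction f using MvPolynomial.induction_on' with
  | add f g hf hg =>
    rw [map_add, hf, hg, ← mul_add]
    congr 1
    ext r
    simp [mul_add]
  | monomial e c =>
    have orbit : (PowerSeries.mk fun r => (r.factorial : ℚ)⁻¹ *
          momentFunctional N (fun _ => (1 : ℚ))
            ((transpositionOperator N d ^ r) (monomial e c))) =
        (c * ∏ j, (e j : ℚ) ^ (j : ℕ)) •
          expSeries (2⁻¹ * (∑ j, (e j : ℚ) ^ 2 - casimirShift N d)) := by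
      ext r
      rw [PowerSeries.coeff_mk, transpositionOperator_pow_monomial, map_smul,
        momentFunctional_monomial, map_smul, coeff_expSeries]
      simp only [smul_eq_mul, mul_one]
      ring
    rw [orbit, momentFunctional_monomial, mul_smul_comm, ← expSeries_add, prod_mul_distrib,
      ← expSeries_sum, mul_smul, Algebra.smul_def (∏ j, _)]
    congr 2
    · simp
    · rw [← sum_div]
      congr 1
      ring

end RadialPower

end Moments

section ColoredToda

open Finset Matrix PowerSeries

section Superfactorial

/-- The Vandermonde determinant of the nodes `0, ..., N - 1`. -/
def natVandermonde (N : ℕ) : ℚ :=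
  det (vandermonde fun i : Fin N => (i : ℚ))

theorem natVandermonde_ne_zero (N : ℕ) : natVandermonde N ≠ 0 :=
  det_vandermonde_ne_zero_iff.2 (Nat.cast_injective.comp Fin.val_injective)

theorem natVandermonde_add_two_mul (n : ℕ) :
    natVandermonde (n + 2) * natVandermonde n = (n + 1) * natVandermonde (n + 1) ^ 2 := by
  simp only [natVandermonde]
  rw [det_vandermonde_id_eq_superFactorial, det_vandermonde_id_eq_superFactorial]
  cases n with
  | zero => simp
  | succ n =>
    rw [det_vandermonde_id_eq_superFactorial, Nat.superFactorial_succ, Nat.superFactorial_succ,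
      Nat.factorial_succ (n + 1)]
    push_cast
    ring

/-- The constant coefficient of the determinant of shifted moments for the weight
`exp (n ^ 2 t / 2) / n!`. -/
noncomputable def groundSeries (N : ℕ) : ℚ⟦X⟧ :=
  natVandermonde N • expSeries ((∑ i ∈ range N, (i : ℚ) ^ 2) / 2)

theorem groundSeries_ne_zero (N : ℕ) : groundSeries N ≠ 0 :=
  smul_ne_zero (natVandermonde_ne_zero N) (isUnit_expSeries _).ne_zero

theorem groundSeries_add_two_mul (n : ℕ) :
    groundSeries (n + 2) * groundSeries n =
      (n + 1) * groundSeries (n + 1) ^ 2 * expSeries ((n : ℚ) + 1 / 2) := by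
  simp only [groundSeries, smul_mul_smul_comm, smul_pow, expSeries_pow,
    natVandermonde_add_two_mul, sum_range_succ]
  rw [mul_assoc, smul_mul_assoc, ← expSeries_add, ← expSeries_add, mul_smul, ← Nat.cast_add_one,
    Nat.cast_smul_eq_nsmul, nsmul_eq_mul, Nat.cast_add_one]
  congr 3
  push_cast
  ring

end Superfactorial

/-- The generating series `∑ d, y ^ d / d! * ∑ r, t ^ r / r! * ∑ N ^ c`, where the inner sum is
over the products of `r` transpositions of `d` letters and `c` is the number of cycles of such a
product, so that `N ^ c` counts the colorings by `N` colors which are constant on cycles. -/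
noncomputable def coloredSeries (N : ℕ) : ℚ⟦X⟧⟦X⟧ :=
  PowerSeries.mk fun d => (d.factorial : ℚ)⁻¹ •
    wordEGF (swapsOn (univ : Finset (Fin d))) fun l => #{w : Fin d → Fin N | w ∘ l.prod = w}

theorem trace_transpositionSum_pow {α σ : Type*} [Fintype α] [DecidableEq α] [Fintype σ]
    [DecidableEq σ] (r : ℕ) :
    trace (transpositionSum α σ ^ r) =
      wordSum (swapsOn univ) (fun l => (#{w : α → σ | w ∘ l.prod = w} : ℚ)) r := by
  rw [transpositionSum, ← wordSum_list_prod, ← traceAddMonoidHom_apply, map_wordSum]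
  simp only [← map_list_prod, traceAddMonoidHom_apply, trace_tensorPerm]

theorem momentFunctional_transpositionOperator_pow (N d r : ℕ) :
    momentFunctional N (fun _ => (1 : ℚ))
        ((transpositionOperator N d ^ r) (det (vandermonde MvPolynomial.X) *
          (∑ j, MvPolynomial.X j) ^ d)) =
      natVandermonde N * wordSum (swapsOn (univ : Finset (Fin d)))
        (fun l => (#{w : Fin d → Fin N | w ∘ l.prod = w} : ℚ)) r := by
  have power := transpositionOperator_pow_vandermonde_mul (α := Fin d) N r
  rw [Fintype.card_fin] at power
  rw [power, momentFunctional_one_vandermonde_mul, eval_one_character,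
    trace_transpositionSum_pow, natVandermonde]

theorem coeff_det_shiftedMomentMatrix_expSeries (N d : ℕ) :
    PowerSeries.coeff d (shiftedMomentMatrix (fun n => expSeries ((n : ℚ) ^ 2 / 2)) N).det =
      natVandermonde N • (expSeries (casimirShift N d / 2) * coeff d (coloredSeries N)) := by
  have orbit : (PowerSeries.mk fun r => (r.factorial : ℚ)⁻¹ *
        momentFunctional N (fun _ => (1 : ℚ)) ((transpositionOperator N d ^ r)
          (det (vandermonde MvPolynomial.X) * (∑ j, MvPolynomial.X j) ^ d))) =
      natVandermonde N • wordEGF (swapsOn (univ : Finset (Fin d)))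
        fun l => (#{w : Fin d → Fin N | w ∘ l.prod = w} : ℚ) := by
    ext r
    rw [coeff_mk, momentFunctional_transpositionOperator_pow, wordEGF, PowerSeries.coeff_smul,
      coeff_mk, smul_eq_mul]
    ring
  rw [coeff_det_shiftedMomentMatrix, momentFunctional_expSeries N d, orbit, coloredSeries, coeff_mk,
    mul_smul_comm, mul_smul_comm, smul_comm]

theorem det_shiftedMomentMatrix_expSeries (N : ℕ) :
    (shiftedMomentMatrix (fun n => expSeries ((n : ℚ) ^ 2 / 2)) N).det =
      C (groundSeries N) * rescale (expSeries (N - 1 / 2 : ℚ)) (coloredSeries N) := by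
  ext1 d
  rw [coeff_det_shiftedMomentMatrix_expSeries, coeff_C_mul, coeff_rescale, expSeries_pow,
    groundSeries, smul_mul_assoc, ← mul_assoc, ← expSeries_add, casimirShift]
  congr 3
  ring

theorem coloredSeries_toda (n : ℕ) :
    todaForm (coloredSeries (n + 1)) = ((n : ℚ⟦X⟧⟦X⟧) + 1) *
      (X * rescale (expSeries (1 : ℚ)) (coloredSeries (n + 2)) *
        rescale (expSeries (-1 : ℚ)) (coloredSeries n)) := by
  let u : ℚ⟦X⟧ := expSeries ((n : ℚ) + 1 / 2)
  have toda := todaForm_det_shiftedMomentMatrix (fun n => expSeries ((n : ℚ) ^ 2 / 2)) n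
  have scale_add_two : expSeries ((n + 2 : ℕ) - 1 / 2 : ℚ) = u * expSeries 1 := by
    rw [← expSeries_add]
    push_cast
    congr 1
    ring
  have scale_add_one : expSeries ((n + 1 : ℕ) - 1 / 2 : ℚ) = u := by
    push_cast
    congr 1
    ring
  have scale_self : expSeries (n - 1 / 2 : ℚ) = u * expSeries (-1) := by
    rw [← expSeries_add]
    congr 1
    ring
  simp only [det_shiftedMomentMatrix_expSeries] at toda
  rw [scale_add_two, scale_add_one, scale_self, todaForm_C_mul, todaForm_rescale, mul_comm u,
    mul_comm u, ← rescale_rescale, ← rescale_rescale, mul_mul_mul_comm, ← map_mul] at toda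
  refine rescale_injective (isUnit_expSeries ((n : ℚ) + 1 / 2)).ne_zero <|
    mul_left_cancel₀ (a := C (groundSeries (n + 1) ^ 2))
      ((map_ne_zero_iff _ C_injective).2 (pow_ne_zero 2 (groundSeries_ne_zero _))) (toda.trans ?_)
  rw [groundSeries_add_two_mul]
  simp only [map_mul, map_add, map_natCast, map_one, rescale_X, u]
  ring

end ColoredToda

section TopCoefficient

open Finset PowerSeries

section CycleCount

variable {α : Type*} [Fintype α]

/-- The number of cycles of a permutation, fixed points included. -/
noncomputable def cycleCount (ρ : Equiv.Perm α) : ℕ :=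
  Nat.card (Function.Coequalizer ρ id)

theorem card_comp_perm_eq_self [DecidableEq α] (ρ : Equiv.Perm α) (N : ℕ) :
    #{w : α → Fin N | w ∘ ρ = w} = N ^ cycleCount ρ := by
  have : Finite (Function.Coequalizer ρ id) :=
    .of_surjective _ (Function.Coequalizer.mk_surjective ρ id)
  let e : {w : α → Fin N // w ∘ ρ = w} ≃ (Function.Coequalizer ρ id → Fin N) :=
    { toFun w := Function.Coequalizer.desc ρ id w w.2
      invFun f := ⟨f ∘ Function.Coequalizer.mk ρ id,
        funext fun x => congrArg f (Function.Coequalizer.condition ρ id x)⟩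
      left_inv _ := rfl
      right_inv f := by
        funext q
        obtain ⟨x, rfl⟩ := Function.Coequalizer.mk_surjective ρ id q
        rfl }
  rw [← Fintype.card_subtype, ← Nat.card_eq_fintype_card, Nat.card_congr e, Nat.card_fun,
    Nat.card_fin, cycleCount]

theorem cycleCount_le (ρ : Equiv.Perm α) : cycleCount ρ ≤ Fintype.card α := by
  rw [← Nat.card_eq_fintype_card]
  exact Nat.card_le_card_of_surjective _ (Function.Coequalizer.mk_surjective ρ id)

theorem cycleCount_eq_card_iff {ρ : Equiv.Perm α} : cycleCount ρ = Fintype.card α ↔ ρ = 1 := by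
  rw [← Nat.card_eq_fintype_card, cycleCount]
  refine ⟨fun h => ?_, ?_⟩
  · have bijective : Function.Bijective (Function.Coequalizer.mk ρ id) :=
      (Nat.bijective_iff_surjective_and_card _).2
        ⟨Function.Coequalizer.mk_surjective ρ id, h.symm⟩
    ext x
    exact bijective.injective (Function.Coequalizer.condition ρ id x)
  · rintro rfl
    refine (Nat.card_congr (Equiv.ofBijective (Function.Coequalizer.mk _ _)
      ⟨?_, Function.Coequalizer.mk_surjective _ _⟩)).symm
    exact Function.LeftInverse.injective (g := Function.Coequalizer.desc _ _ id rfl) fun _ => rfl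

end CycleCount

section ColoringPolynomial

/-- The polynomial in the number `N` of colors whose values are the coefficients of
`coloredSeries N`. -/
noncomputable def coloringPolynomial (d : ℕ) : Polynomial ℚ⟦X⟧ :=
  ∑ k ∈ range (d + 1), Polynomial.monomial k ((d.factorial : ℚ)⁻¹ •
    wordEGF (swapsOn (univ : Finset (Fin d))) fun l => if cycleCount l.prod = k then 1 else 0)

theorem eval_coloringPolynomial (d N : ℕ) :
    (coloringPolynomial d).eval (N : ℚ⟦X⟧) = coeff d (coloredSeries N) := by
  have count (l : List (Equiv.Perm (Fin d))) :
      ∑ k ∈ range (d + 1), (if cycleCount l.prod = k then 1 else 0) * (N : ℚ) ^ k =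
        #{w : Fin d → Fin N | w ∘ l.prod = w} := by
    have mem : cycleCount l.prod ∈ range (d + 1) := by
      simpa [Nat.lt_succ_iff] using cycleCount_le l.prod
    rw [card_comp_perm_eq_self]
    simp_rw [ite_mul, one_mul, zero_mul]
    rw [sum_ite_eq, if_pos mem, Nat.cast_pow]
  simp only [coloringPolynomial, Polynomial.eval_finsetSum, Polynomial.eval_monomial,
    smul_mul_assoc, ← smul_sum, coloredSeries, coeff_mk]
  congr 1
  ext r
  simp only [map_sum, ← map_natCast (C (R := ℚ)), ← map_pow, coeff_mul_C, wordEGF, coeff_mk,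
    wordSum_eq_sum_piFinset, ← count, div_mul_eq_mul_div, ← sum_div, sum_mul]
  rw [sum_comm]

theorem natDegree_coloringPolynomial_le (d : ℕ) : (coloringPolynomial d).natDegree ≤ d :=
  Polynomial.natDegree_sum_le_of_forall_le _ _ fun _ hk =>
    (Polynomial.natDegree_monomial_le _).trans (mem_range_succ_iff.1 hk)

theorem coeff_coloringPolynomial (d : ℕ) :
    (coloringPolynomial d).coeff d = coeff d factorizationSeries := by
  have eq_one_iff (ρ : Equiv.Perm (Fin d)) : cycleCount ρ = d ↔ ρ = 1 := by
    rw [← cycleCount_eq_card_iff, Fintype.card_fin]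
  simp only [coloringPolynomial, Polynomial.finsetSum_coeff, Polynomial.coeff_monomial,
    sum_ite_eq', mem_range, Nat.lt_succ_self, if_true, eq_one_iff, factorizationSeries, coeff_mk,
    factorizationEGF]

theorem coeff_taylor_of_natDegree_le {R : Type*} [CommRing R] {f : Polynomial R} {d : ℕ}
    (hf : f.natDegree ≤ d) (c : R) : (Polynomial.taylor c f).coeff d = f.coeff d := by
  rcases hf.eq_or_lt with rfl | h
  · exact Polynomial.coeff_taylor_natDegree _ _
  · rw [Polynomial.coeff_eq_zero_of_natDegree_lt h,
      Polynomial.coeff_eq_zero_of_natDegree_lt (by rwa [Polynomial.natDegree_taylor])]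

theorem coeff_todaForm {R : Type*} [CommRing R] (f : R⟦X⟧) (d : ℕ) :
    coeff d (todaForm f) =
      ∑ p ∈ antidiagonal d, ((p.1 : R) ^ 2 - p.1 * p.2) * (coeff p.1 f * coeff p.2 f) := by
  rw [todaForm, mul_comm, sq, map_sub, coeff_mul, coeff_mul, ← sum_sub_distrib]
  simp only [coeff_eulerDerivation]
  exact sum_congr rfl fun p _ => by ring

theorem coeff_X_mul_rescale_mul_rescale (f g : ℚ⟦X⟧⟦X⟧) (d : ℕ) :
    coeff (d + 1) (X * rescale (expSeries (1 : ℚ)) f * rescale (expSeries (-1 : ℚ)) g) =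
      ∑ p ∈ antidiagonal d, expSeries ((p.1 : ℚ) - p.2) * (coeff p.1 f * coeff p.2 g) := by
  rw [mul_assoc, coeff_succ_X_mul, coeff_mul]
  refine sum_congr rfl fun p _ => ?_
  rw [coeff_rescale, coeff_rescale, expSeries_pow, expSeries_pow, mul_mul_mul_comm, ← expSeries_add]
  ring_nf

theorem coloringPolynomial_toda (d : ℕ) :
    ∑ p ∈ antidiagonal (d + 1), Polynomial.C ((p.1 : ℚ⟦X⟧) ^ 2 - p.1 * p.2) *
        (coloringPolynomial p.1 * coloringPolynomial p.2) =
      Polynomial.X * ∑ p ∈ antidiagonal d, Polynomial.C (expSeries ((p.1 : ℚ) - p.2)) *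
        (Polynomial.taylor 1 (coloringPolynomial p.1) *
          Polynomial.taylor (-1) (coloringPolynomial p.2)) := by
  have : CharZero ℚ⟦X⟧ := charZero_of_injective_algebraMap (algebraMap ℚ ℚ⟦X⟧).injective
  have infinite : (Set.range fun n : ℕ => ((n + 1 : ℕ) : ℚ⟦X⟧)).Infinite :=
    Set.infinite_range_of_injective (Nat.cast_injective.comp (add_left_injective 1))
  refine Polynomial.eq_of_infinite_eval_eq _ _ (infinite.mono ?_)
  rintro _ ⟨n, rfl⟩
  have succ : ((n + 1 : ℕ) : ℚ⟦X⟧) + 1 = (n + 2 : ℕ) := by push_cast; ring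
  have pred : ((n + 1 : ℕ) : ℚ⟦X⟧) + -1 = n := by push_cast; ring
  simp only [Set.mem_ofPred_eq, Polynomial.eval_mul, Polynomial.eval_X, Polynomial.eval_finsetSum,
    Polynomial.eval_C, Polynomial.taylor_eval, succ, pred, eval_coloringPolynomial]
  rw [← coeff_todaForm, coloredSeries_toda, ← coeff_X_mul_rescale_mul_rescale, ← Nat.cast_add_one,
    ← map_natCast C, coeff_C_mul]

theorem factorizationSeries_toda :
    todaForm factorizationSeries = X * rescale (expSeries (1 : ℚ)) factorizationSeries *
      rescale (expSeries (-1 : ℚ)) factorizationSeries := by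
  ext1 d
  cases d with
  | zero => simp [coeff_todaForm]
  | succ d =>
    have degree (p : ℕ) := natDegree_coloringPolynomial_le p
    have toda := congrArg (Polynomial.coeff · (d + 1)) (coloringPolynomial_toda d)
    simp only [Polynomial.coeff_X_mul, Polynomial.finsetSum_coeff, Polynomial.coeff_C_mul] at toda
    rw [coeff_todaForm, coeff_X_mul_rescale_mul_rescale]
    refine Eq.trans (sum_congr rfl fun p hp => ?_) (toda.trans (sum_congr rfl fun p hp => ?_))
    · rw [← mem_antidiagonal.1 hp,
        Polynomial.coeff_mul_add_eq_of_natDegree_le (degree _) (degree _),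
        coeff_coloringPolynomial, coeff_coloringPolynomial]
    · rw [← mem_antidiagonal.1 hp, Polynomial.coeff_mul_add_eq_of_natDegree_le,
        coeff_taylor_of_natDegree_le (degree _), coeff_taylor_of_natDegree_le (degree _),
        coeff_coloringPolynomial, coeff_coloringPolynomial]
      all_goals rw [Polynomial.natDegree_taylor]; exact degree _

end ColoringPolynomial

end TopCoefficient

section Recursion

open Finset PowerSeries

section LogarithmicToda

variable {R : Type*} [CommRing R] [IsDomain R]

theorem eulerDerivation_of_toda {Z F : R⟦X⟧} {a b : R} (hZ : Z ≠ 0)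
    (hF : eulerDerivation R Z = Z * eulerDerivation R F)
    (toda : todaForm Z = X * rescale a Z * rescale b Z) :
    eulerDerivation R (eulerDerivation R (eulerDerivation R F)) =
      eulerDerivation R (eulerDerivation R F) *
        (1 + eulerDerivation R (rescale a F + rescale b F - 2 * F)) := by
  have log_rescale (c : R) : eulerDerivation R (rescale c Z) =
      rescale c Z * eulerDerivation R (rescale c F) := by
    rw [eulerDerivation_rescale, hF, map_mul, eulerDerivation_rescale]
  have euler_X : eulerDerivation R (X : R⟦X⟧) = X := by
    simpa using eulerDerivation_X_pow (R := R) 1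
  have second_log : Z ^ 2 * eulerDerivation R (eulerDerivation R F) =
      X * rescale a Z * rescale b Z := by
    rw [← toda, todaForm, hF, Derivation.leibniz, hF, smul_eq_mul, smul_eq_mul]
    ring
  have derivative := congrArg (eulerDerivation R) second_log
  simp only [sq, Derivation.leibniz, log_rescale, hF, euler_X, smul_eq_mul] at derivative
  refine mul_left_cancel₀ (pow_ne_zero 2 hZ) ?_
  simp only [two_mul, map_sub, map_add]
  linear_combination derivative - second_log *
    (1 + eulerDerivation R (rescale a F) + eulerDerivation R (rescale b F))

end LogarithmicToda

section LowestOrder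

theorem coeff_add_mul_of_X_pow_dvd {R : Type*} [CommRing R] {f g : R⟦X⟧} {a b : ℕ}
    (hf : X ^ a ∣ f) (hg : X ^ b ∣ g) : coeff (a + b) (f * g) = coeff a f * coeff b g := by
  obtain ⟨f, rfl⟩ := hf
  obtain ⟨g, rfl⟩ := hg
  have coeff_self (k : ℕ) (h : R⟦X⟧) : coeff k (X ^ k * h) = coeff 0 h := by
    rw [← coeff_X_pow_mul h k 0, zero_add]
  rw [mul_mul_mul_comm, ← pow_add, coeff_self, coeff_self, coeff_self,
    coeff_zero_eq_constantCoeff_apply, map_mul, coeff_zero_eq_constantCoeff_apply,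
    coeff_zero_eq_constantCoeff_apply]

theorem X_sq_dvd_expSeries_add_expSeries_neg_sub_two (c : ℚ) :
    X ^ 2 ∣ expSeries c + expSeries (-c) - 2 := by
  refine X_pow_dvd_iff.2 fun m hm => ?_
  rw [← map_ofNat (C (R := ℚ)), map_sub, map_add, coeff_expSeries, coeff_expSeries, coeff_C]
  interval_cases m <;> norm_num

theorem coeff_two_expSeries_add_expSeries_neg_sub_two (c : ℚ) :
    coeff 2 (expSeries c + expSeries (-c) - 2) = c ^ 2 := by
  rw [← map_ofNat (C (R := ℚ)), map_sub, map_add, coeff_expSeries, coeff_expSeries, coeff_C]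
  norm_num [Nat.factorial]
  ring

theorem factorizationSeries_ne_zero : factorizationSeries ≠ 0 := fun h => by
  have constant := congrArg (fun f => constantCoeff (coeff 0 f)) h
  simp [factorizationSeries, factorizationEGF, constantCoeff_wordEGF] at constant

theorem coeff_hurwitzSeries_rec (d : ℕ) :
    C (((d : ℚ) - 1) * d ^ 2) * coeff d hurwitzSeries =
      ∑ p ∈ antidiagonal d, C ((p.1 : ℚ) ^ 2 * p.2) * (coeff p.1 hurwitzSeries *
        ((expSeries (p.2 : ℚ) + expSeries (-p.2 : ℚ) - 2) * coeff p.2 hurwitzSeries)) := by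
  have toda := congrArg (coeff d) <| eulerDerivation_of_toda factorizationSeries_ne_zero
    eulerDerivation_factorizationSeries factorizationSeries_toda
  rw [mul_add, mul_one, map_add, coeff_mul] at toda
  simp only [coeff_eulerDerivation, two_mul, map_add, map_sub, coeff_rescale, expSeries_pow]
    at toda
  calc C (((d : ℚ) - 1) * d ^ 2) * coeff d hurwitzSeries
      = (d : ℚ⟦X⟧) * ((d : ℚ⟦X⟧) * ((d : ℚ⟦X⟧) * coeff d hurwitzSeries)) -
          (d : ℚ⟦X⟧) * ((d : ℚ⟦X⟧) * coeff d hurwitzSeries) := by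
        simp only [map_mul, map_sub, map_pow, map_natCast, map_one]
        ring
    _ = _ := by
        rw [toda, add_sub_cancel_left]
        refine sum_congr rfl fun p _ => ?_
        simp only [map_mul, map_pow, map_natCast, mul_one, mul_neg]
        ring

theorem X_pow_dvd_coeff_hurwitzSeries (d : ℕ) : X ^ (2 * d - 2) ∣ coeff d hurwitzSeries := by
  induction d using Nat.strong_induction_on with
  | _ d ih =>
    obtain hd | hd := Nat.lt_or_ge d 2
    · rw [show 2 * d - 2 = 0 by omega, pow_zero]
      exact one_dvd _
    have unit : IsUnit (C (((d : ℚ) - 1) * d ^ 2)) := by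
      have : (2 : ℚ) ≤ d := by exact_mod_cast hd
      exact (IsUnit.mk0 _ (mul_pos (by linarith) (by positivity)).ne').map C
    rw [← unit.dvd_mul_left, coeff_hurwitzSeries_rec]
    refine dvd_sum fun p hp => ?_
    rw [HasAntidiagonal.mem_antidiagonal] at hp
    obtain h | h | ⟨h₁, h₂⟩ : p.1 = 0 ∨ p.2 = 0 ∨ 0 < p.1 ∧ 0 < p.2 := by omega
    · simp [h]
    · simp [h]
    · rw [show 2 * d - 2 = 2 * p.1 - 2 + (2 + (2 * p.2 - 2)) by omega, pow_add, pow_add]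
      exact (mul_dvd_mul (ih _ (by omega)) (mul_dvd_mul
        (X_sq_dvd_expSeries_add_expSeries_neg_sub_two _) (ih _ (by omega)))).mul_left _

/-- The coefficient of lowest order in `t` of the degree `d` part of `hurwitzSeries`: a covering of
degree `d` by a curve of genus `0` has `2 d - 2` branch points. -/
noncomputable def genusZeroCoeff (d : ℕ) : ℚ := coeff (2 * d - 2) (coeff d hurwitzSeries)

theorem hurwitzNumber_zero_eq (d : ℕ) :
    hurwitzNumber 0 d = (2 * d - 2).factorial * genusZeroCoeff d := by
  have : ((2 * d - 2).factorial : ℚ) ≠ 0 := by positivity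
  rw [hurwitzNumber, genusZeroCoeff, hurwitzSeries, coeff_mk, PowerSeries.coeff_smul, hurwitzEGF,
    coeff_mk, mul_zero, zero_add, smul_eq_mul]
  field_simp

theorem genusZeroCoeff_rec (d : ℕ) :
    ((d : ℚ) - 1) * d ^ 2 * genusZeroCoeff d =
      ∑ p ∈ antidiagonal d, (p.1 : ℚ) ^ 2 * p.2 ^ 3 *
        (genusZeroCoeff p.1 * genusZeroCoeff p.2) := by
  rw [genusZeroCoeff, ← coeff_C_mul, coeff_hurwitzSeries_rec, map_sum]
  refine sum_congr rfl fun p hp => ?_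
  rw [HasAntidiagonal.mem_antidiagonal] at hp
  obtain h | h | ⟨h₁, h₂⟩ : p.1 = 0 ∨ p.2 = 0 ∨ 0 < p.1 ∧ 0 < p.2 := by omega
  · simp [h]
  · simp [h]
  · have dvd := X_sq_dvd_expSeries_add_expSeries_neg_sub_two p.2
    have dvd₁ := X_pow_dvd_coeff_hurwitzSeries p.1
    have dvd₂ := X_pow_dvd_coeff_hurwitzSeries p.2
    have dvd_mul := mul_dvd_mul dvd dvd₂
    rw [← pow_add] at dvd_mul
    rw [show 2 * d - 2 = 2 * p.1 - 2 + (2 + (2 * p.2 - 2)) by omega, coeff_C_mul,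
      coeff_add_mul_of_X_pow_dvd dvd₁ dvd_mul,
      coeff_add_mul_of_X_pow_dvd dvd dvd₂, coeff_two_expSeries_add_expSeries_neg_sub_two,
      genusZeroCoeff, genusZeroCoeff]
    ring

theorem two_mul_genusZeroCoeff {d : ℕ} (hd : d ≠ 0) :
    2 * ((d : ℚ) - 1) * d * genusZeroCoeff d =
      ∑ p ∈ antidiagonal d, (p.1 : ℚ) ^ 2 * p.2 ^ 2 *
        (genusZeroCoeff p.1 * genusZeroCoeff p.2) := by
  have recursion := genusZeroCoeff_rec d
  have swapped := recursion
  rw [← Nat.sum_antidiagonal_swap] at swapped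
  have symmetrized : ∑ p ∈ antidiagonal d, (d : ℚ) * ((p.1 : ℚ) ^ 2 * p.2 ^ 2 *
      (genusZeroCoeff p.1 * genusZeroCoeff p.2)) =
      2 * (((d : ℚ) - 1) * d ^ 2 * genusZeroCoeff d) := by
    rw [two_mul]
    nth_rw 1 [recursion]
    rw [swapped, ← sum_add_distrib]
    refine sum_congr rfl fun p hp => ?_
    rw [← HasAntidiagonal.mem_antidiagonal.1 hp, Prod.fst_swap, Prod.snd_swap]
    push_cast
    ring
  refine mul_left_cancel₀ (Nat.cast_ne_zero.2 hd : (d : ℚ) ≠ 0) ?_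
  rw [mul_sum, symmetrized]
  ring

theorem sum_Icc_choose_mul_hurwitzNumber_zero (d : ℕ) :
    ∑ i ∈ Finset.Icc 1 (d - 1),
        (Nat.choose (2 * d - 4) (2 * i - 2) : ℚ) * (i : ℚ) ^ 2 * ((d - i : ℕ) : ℚ) ^ 2 *
          hurwitzNumber 0 i * hurwitzNumber 0 (d - i) =
      (2 * d - 4).factorial * ∑ p ∈ antidiagonal d, (p.1 : ℚ) ^ 2 * p.2 ^ 2 *
        (genusZeroCoeff p.1 * genusZeroCoeff p.2) := by
  have subset : Icc 1 (d - 1) ⊆ range (d + 1) := fun i hi => by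
    rw [mem_Icc] at hi
    rw [mem_range]
    omega
  rw [Nat.sum_antidiagonal_eq_sum_range_succ_mk, mul_sum]
  refine sum_subset_zero_on_sdiff subset (fun i hi => ?_) fun i hi => ?_
  · have : i = 0 ∨ d - i = 0 := by
      simp only [mem_sdiff, mem_range, mem_Icc] at hi
      omega
    obtain h | h := this <;> simp [h]
  · rw [mem_Icc] at hi
    have choose_mul := Nat.choose_mul_factorial_mul_factorial
      (show 2 * i - 2 ≤ 2 * d - 4 by omega)
    rw [show 2 * d - 4 - (2 * i - 2) = 2 * (d - i) - 2 by omega] at choose_mul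
    rw [hurwitzNumber_zero_eq, hurwitzNumber_zero_eq, ← choose_mul]
    push_cast
    ring

end LowestOrder

end Recursion

/-- The genus `0` recursion for the Hurwitz numbers:
`H_{0,d} = ((2d-3)/d) ⬝ ∑_{i=1}^{d-1} C(2d-4, 2i-2) i² (d-i)² H_{0,i} H_{0,d-i}`. -/
theorem genus_zero_hurwitz_recursion (d : ℕ) (hd : 2 ≤ d) :
    hurwitzNumber 0 d =
      ((2 * (d : ℚ) - 3) / (d : ℚ)) *
        ∑ i ∈ Finset.Icc 1 (d - 1),
          (Nat.choose (2 * d - 4) (2 * i - 2) : ℚ) * (i : ℚ) ^ 2 * ((d - i : ℕ) : ℚ) ^ 2 *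
            hurwitzNumber 0 i * hurwitzNumber 0 (d - i) := by
  have factorial_eq : ((2 * d - 2).factorial : ℚ) =
      (2 * d - 2) * (2 * d - 3) * (2 * d - 4).factorial := by
    obtain ⟨e, rfl⟩ := Nat.exists_eq_add_of_le hd
    rw [show 2 * (2 + e) - 2 = 2 * e + 1 + 1 by omega, show 2 * (2 + e) - 4 = 2 * e by omega,
      Nat.factorial_succ, Nat.factorial_succ]
    push_cast
    ring
  rw [sum_Icc_choose_mul_hurwitzNumber_zero, ← two_mul_genusZeroCoeff (by omega),
    hurwitzNumber_zero_eq, factorial_eq]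
  field_simp
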